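/- arXiv:2510.16910 — 2 statements merged into one kernel-verified Lean document; each statement's English description precedes it below -/
import Mathlib

section
/- Let K be a connected compact metric space, φ an isometry of K whose periodic points form a meagre set, w invertible in Lip_α(K) (0 < α ≤ 1), and T f = w·(f∘φ). Then σ(T, Lip_α(K)) is an annulus {λ : r ≤ |λ| ≤ R} or a circle centered at 0, where r = min_{μ ∈ M_φ} exp(∫ ln|w| dμ) and R = max_{μ ∈ M_φ} exp(∫ ln|w| dμ), and M_φ is the set of φ-invariant Borel probability measures on K. -/
open MeasureTheory

/-- Sup norm of a function, as a real supremum. -/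
noncomputable def supNorm {K : Type*} (f : K → ℂ) : ℝ :=
  sSup (Set.range fun x => ‖f x‖)

/-- The norm of the Hölder algebra `Lip_α(K)`. -/
noncomputable def holderNorm {K : Type*} [MetricSpace K] (a : ℝ) (f : K → ℂ) : ℝ :=
  supNorm f + sSup {r : ℝ | ∃ x y : K, x ≠ y ∧ r = ‖f x - f y‖ / dist x y ^ a}

/-- The set of α-Hölder functions on `K`. -/
def HolSet {K : Type*} [MetricSpace K] (a : ℝ) : Set (K → ℂ) :=
  {f | ∃ C : ℝ, ∀ x y : K, ‖f x - f y‖ ≤ C * dist x y ^ a}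

/-- `lam` belongs to the resolvent set of the operator `T` acting on the subalgebra `A`
(with norm `N`): `lam • I - T` maps `A` bijectively onto `A` with a bounded inverse. -/
def InResolvent {K : Type*} (A : Set (K → ℂ)) (N : (K → ℂ) → ℝ)
    (T : (K → ℂ) → (K → ℂ)) (lam : ℂ) : Prop :=
  (∀ f ∈ A, lam • f - T f ∈ A) ∧
  (∀ f ∈ A, lam • f - T f = 0 → f = 0) ∧
  ∃ C > 0, ∀ g ∈ A, ∃ f ∈ A, lam • f - T f = g ∧ N f ≤ C * N g

section

open Filter Topology

theorem aux_equi {K : Type*} [MetricSpace K] [CompactSpace K] (φ : K → K) (hφ : Isometry φ)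
    (u : K → ℝ) (hu : Continuous u) (ε : ℝ) (hε : 0 < ε) :
    ∃ δ > 0, ∀ x y : K, dist x y < δ → ∀ n,
      |birkhoffAverage ℝ φ u n x - birkhoffAverage ℝ φ u n y| < ε := by
  have h := uniformEquicontinuous_birkhoffAverage ℝ (f := φ) (g := u) hφ.lipschitz
    (CompactSpace.uniformContinuous_of_continuous hu)
  rw [Metric.uniformEquicontinuous_iff] at h
  obtain ⟨δ, hδ, h⟩ := h ε hε
  exact ⟨δ, hδ, fun x y hxy n => by simpa [Real.dist_eq] using h x y hxy n⟩

theorem aux_shift {K : Type*} [MetricSpace K] [CompactSpace K] (φ : K → K)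
    (u : K → ℝ) (hu : Continuous u) (x : K) (j : ℕ) :
    Tendsto (fun n => birkhoffAverage ℝ φ u n (φ^[j] x) - birkhoffAverage ℝ φ u n x)
      atTop (𝓝 0) := by
  induction j with
  | zero => simp
  | succ j ih =>
    have hb : Bornology.IsBounded (Set.range u) := (isCompact_range hu).isBounded
    have := (tendsto_birkhoffAverage_apply_sub_birkhoffAverage' ℝ hb φ (φ^[j] x)).add ih
    simpa [Function.iterate_succ_apply'] using this

theorem aux_unif {K : Type*} [MetricSpace K] [CompactSpace K] (φ : K → K) (hφ : Isometry φ)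
    (u : K → ℝ) (hu : Continuous u) (x : K) (ε : ℝ) (hε : 0 < ε) :
    ∃ N : ℕ, ∀ n ≥ N, ∀ j,
      |birkhoffAverage ℝ φ u n (φ^[j] x) - birkhoffAverage ℝ φ u n x| ≤ ε := by
  obtain ⟨δ, hδ, h⟩ := aux_equi φ hφ u hu (ε/2) (by positivity)
  have htb : TotallyBounded (Set.range fun j => φ^[j] x) :=
    isCompact_univ.totallyBounded.subset (Set.subset_univ _)
  obtain ⟨t, hts, htf, hcov⟩ := totallyBounded_iff_subset.1 htb _ (Metric.dist_mem_uniformity hδ)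
  have hev : ∀ᶠ n in atTop, ∀ p ∈ t,
      |birkhoffAverage ℝ φ u n p - birkhoffAverage ℝ φ u n x| < ε/2 := by
    refine (Filter.eventually_all_finite htf).2 fun p hp => ?_
    obtain ⟨i, rfl⟩ := hts hp
    have := (aux_shift φ u hu x i)
    have := (Metric.tendsto_nhds.1 this) (ε/2) (by positivity)
    simpa [Real.dist_eq] using this
  obtain ⟨N, hN⟩ := eventually_atTop.1 hev
  refine ⟨N, fun n hn j => ?_⟩
  have := hcov (Set.mem_range_self j)
  simp only [Set.mem_iUnion] at this
  obtain ⟨p, hp, hd⟩ := this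
  have h1 := h _ _ hd n
  have h2 := hN n hn p hp
  rw [abs_lt] at h1 h2
  rw [abs_le]
  constructor <;> linarith

theorem aux_mul {K : Type*} (φ : K → K) (u : K → ℝ) (x : K) (n : ℕ) (c ε : ℝ)
    (h : ∀ j, |birkhoffSum φ u n (φ^[j] x) - c| ≤ ε) (m : ℕ) :
    |birkhoffSum φ u (m * n) x - m * c| ≤ m * ε := by
  induction m with
  | zero => simp
  | succ m ih =>
    rw [Nat.succ_mul, birkhoffSum_add]
    have := h (m * n)
    rw [abs_le] at *
    push_cast
    constructor <;> linarith

theorem aux_mul' {K : Type*} (φ : K → K) (u : K → ℝ) (x : K) (n : ℕ) (hn : 0 < n) (ε : ℝ)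
    (h : ∀ j, |birkhoffAverage ℝ φ u n (φ^[j] x) - birkhoffAverage ℝ φ u n x| ≤ ε)
    (m : ℕ) (hm : 0 < m) :
    |birkhoffAverage ℝ φ u (m * n) x - birkhoffAverage ℝ φ u n x| ≤ ε := by
  have hn' : (0:ℝ) < n := by exact_mod_cast hn
  have hm' : (0:ℝ) < m := by exact_mod_cast hm
  have key := aux_mul φ u x n (birkhoffSum φ u n x) (n * ε) (fun j => by
    have := h j
    simp only [birkhoffAverage, smul_eq_mul, ← mul_sub, abs_mul, abs_inv, Nat.abs_cast] at this
    rwa [inv_mul_le_iff₀ hn'] at this) m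
  have e : birkhoffAverage ℝ φ u (m * n) x - birkhoffAverage ℝ φ u n x
      = (m * n : ℝ)⁻¹ * (birkhoffSum φ u (m * n) x - m * birkhoffSum φ u n x) := by
    simp only [birkhoffAverage, smul_eq_mul]
    push_cast
    field_simp
  rw [e, abs_mul, abs_of_pos (by positivity), inv_mul_le_iff₀ (by positivity)]
  linarith

theorem aux_conv {K : Type*} [MetricSpace K] [CompactSpace K] (φ : K → K) (hφ : Isometry φ)
    (u : K → ℝ) (hu : Continuous u) (x : K) :
    ∃ l, Tendsto (fun n => birkhoffAverage ℝ φ u n x) atTop (𝓝 l) := by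
  apply cauchySeq_tendsto_of_complete
  rw [Metric.cauchySeq_iff]
  intro ε hε
  obtain ⟨N, hN⟩ := aux_unif φ hφ u hu x (ε/3) (by positivity)
  refine ⟨N + 1, fun m hm n hn => ?_⟩
  have h1 := aux_mul' φ u x n (by omega) _ (hN n (by omega)) m (by omega)
  have h2 := aux_mul' φ u x m (by omega) _ (hN m (by omega)) n (by omega)
  rw [mul_comm] at h2
  rw [Real.dist_eq]
  rw [abs_le] at h1 h2
  rw [abs_lt]
  constructor <;> linarith

theorem aux_meas {K : Type*} [MetricSpace K] [CompactSpace K] [MeasurableSpace K] [BorelSpace K]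
    (φ : K → K) (hφ : Isometry φ) (x : K) :
    ∃ μ : Measure K, IsProbabilityMeasure μ ∧ Measure.map φ μ = μ ∧
      ∀ f : K → ℝ, Continuous f →
        Tendsto (fun n => birkhoffAverage ℝ φ f n x) atTop (𝓝 (∫ t, f t ∂μ)) := by
  let ν : ℕ → Measure K := fun n =>
    ((n : ENNReal) + 1)⁻¹ • ∑ i ∈ Finset.range (n + 1), Measure.dirac (φ^[i] x)
  have hν : ∀ n, IsProbabilityMeasure (ν n) := fun n => ⟨by
    simp only [ν, Measure.smul_apply, Measure.finsetSum_apply, measure_univ, smul_eq_mul,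
      Finset.sum_const, Finset.card_range, nsmul_eq_mul, mul_one]
    push_cast
    exact ENNReal.inv_mul_cancel (by simp) (by finiteness)⟩
  have hint : ∀ n, ∀ f : K → ℝ, Continuous f →
      ∫ t, f t ∂(ν n) = birkhoffAverage ℝ φ f (n + 1) x := by
    intro n f hf
    simp only [ν]
    rw [integral_smul_measure, integral_finsetSum_measure]
    · simp [birkhoffAverage, birkhoffSum, integral_dirac, ENNReal.toReal_inv, ENNReal.toReal_add]
    · intro i _
      exact hf.integrable_of_hasCompactSupport (HasCompactSupport.of_compactSpace f)
  let P : ℕ → ProbabilityMeasure K := fun n => ⟨ν n, hν n⟩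
  let U : Ultrafilter ℕ := Ultrafilter.of atTop
  have hU : (U : Filter ℕ) ≤ atTop := Ultrafilter.of_le atTop
  let L : ProbabilityMeasure K := (U.map P).lim
  have hL : Tendsto P U (𝓝 L) := (U.map P).le_nhds_lim
  have hlim := ProbabilityMeasure.tendsto_iff_forall_integral_tendsto.1 hL
  have hfin : ∀ f : K → ℝ, Continuous f →
        Tendsto (fun n => birkhoffAverage ℝ φ f n x) atTop (𝓝 (∫ t, f t ∂(L : Measure K))) := by
    intro f hf
    obtain ⟨l, hl⟩ := aux_conv φ hφ f hf x
    have h1 := hlim (BoundedContinuousFunction.mkOfCompact ⟨f, hf⟩)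
    have h2 : Tendsto (fun n => ∫ t, f t ∂(P n : Measure K)) U (𝓝 l) := by
      have : (fun n => ∫ t, f t ∂(P n : Measure K)) =
        fun n => birkhoffAverage ℝ φ f (n + 1) x := funext fun n => hint n f hf
      rw [this]
      exact ((tendsto_add_atTop_iff_nat 1).2 hl).mono_left hU
    have : l = ∫ t, f t ∂(L : Measure K) := tendsto_nhds_unique h2 h1
    rwa [← this]
  refine ⟨L, inferInstance, ?_, hfin⟩
  have : IsProbabilityMeasure (Measure.map φ (L : Measure K)) :=
    Measure.isProbabilityMeasure_map hφ.continuous.aemeasurable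
  apply ext_of_forall_integral_eq_of_IsFiniteMeasure
  intro f
  rw [integral_map hφ.continuous.aemeasurable f.continuous.aestronglyMeasurable]
  have h1 := hfin (fun t => f (φ t)) (f.continuous.comp hφ.continuous)
  have h2 := (aux_shift φ f f.continuous x 1).add (hfin f f.continuous)
  simp only [sub_add_cancel, zero_add, Function.iterate_one] at h2
  refine tendsto_nhds_unique h1 (h2.congr fun n => ?_)
  simp only [birkhoffAverage, birkhoffSum]
  congr 1
  refine Finset.sum_congr rfl fun i _ => ?_
  rw [← Function.iterate_succ_apply, Function.iterate_succ_apply']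

theorem aux_upper {K : Type*} [MetricSpace K] [CompactSpace K] [MeasurableSpace K] [BorelSpace K]
    (φ : K → K) (hφ : Isometry φ) (f : K → ℝ) (hf : Continuous f) (c : ℝ)
    (hc : ∀ μ : Measure K, IsProbabilityMeasure μ → Measure.map φ μ = μ → ∫ t, f t ∂μ ≤ c)
    (ε : ℝ) (hε : 0 < ε) :
    ∃ C : ℝ, ∀ n x, birkhoffSum φ f n x ≤ n * (c + ε) + C := by
  obtain ⟨δ, hδ, h⟩ := aux_equi φ hφ f hf (ε/2) (by positivity)
  obtain ⟨t, -, htf, hcov⟩ := totallyBounded_iff_subset.1 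
    (isCompact_univ (X := K)).totallyBounded _ (Metric.dist_mem_uniformity hδ)
  have hev : ∀ᶠ n in atTop, ∀ p ∈ t, birkhoffAverage ℝ φ f n p < c + ε/2 := by
    refine (Filter.eventually_all_finite htf).2 fun p hp => ?_
    obtain ⟨μ, h1, h2, h3⟩ := aux_meas φ hφ p
    exact (h3 f hf).eventually_lt_const (by linarith [hc μ h1 h2])
  obtain ⟨N, hN⟩ := eventually_atTop.1 hev
  obtain ⟨B, hB⟩ : ∃ B, ∀ x, |f x| ≤ B := by
    obtain ⟨B, hB⟩ := (isCompact_range hf).isBounded.exists_norm_le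
    exact ⟨B, fun x => hB _ (Set.mem_range_self x)⟩
  refine ⟨(N + 1) * (|B| + |c + ε|), fun n x => ?_⟩
  by_cases hn : N + 1 ≤ n
  · have := hcov (Set.mem_univ x)
    simp only [Set.mem_iUnion] at this
    obtain ⟨p, hp, hd⟩ := this
    have h1 := h _ _ hd n
    have h2 := hN n (by omega) p hp
    have h3 : birkhoffAverage ℝ φ f n x ≤ c + ε := by rw [abs_lt] at h1; linarith
    have hn' : (0:ℝ) < n := by exact_mod_cast (by omega : 0 < n)
    simp only [birkhoffAverage, smul_eq_mul] at h3
    rw [inv_mul_le_iff₀ hn'] at h3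
    have : 0 ≤ (N + 1) * (|B| + |c + ε|) := by positivity
    linarith
  · have hn' : (n:ℝ) ≤ N + 1 := by exact_mod_cast (by omega : n ≤ N + 1)
    have h1 : birkhoffSum φ f n x ≤ n * |B| := by
      unfold birkhoffSum
      calc _ ≤ ∑ i ∈ Finset.range n, |B| := Finset.sum_le_sum fun i _ =>
              (le_abs_self _).trans ((hB _).trans (le_abs_self _))
        _ = _ := by simp
    have h2 : -(n * (c + ε)) ≤ n * |c + ε| := by
      have := neg_abs_le (c + ε)
      nlinarith [Nat.cast_nonneg (α := ℝ) n]
    have h3 : (n:ℝ) * (|B| + |c+ε|) ≤ (N + 1) * (|B| + |c + ε|) := by gcongr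
    linarith

theorem aux_exists_ge {K : Type*} [MetricSpace K] [CompactSpace K] [MeasurableSpace K]
    [BorelSpace K] (φ : K → K) (hφ : Isometry φ) (f : K → ℝ) (hf : Continuous f) (F : K → ℝ)
    (hF : ∀ x, Tendsto (fun n => birkhoffAverage ℝ φ f n x) atTop (𝓝 (F x)))
    (μ : Measure K) (h1 : IsProbabilityMeasure μ) (h2 : Measure.map φ μ = μ) (_hFc : Continuous F) :
    ∫ t, f t ∂μ = ∫ t, F t ∂μ := by
  have hi : ∀ g : K → ℝ, Continuous g → Integrable g μ := fun g hg =>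
    hg.integrable_of_hasCompactSupport (HasCompactSupport.of_compactSpace g)
  have hci : ∀ i, Continuous fun t => f (φ^[i] t) := fun i =>
    hf.comp (hφ.continuous.iterate i)
  have hit : ∀ i, ∫ t, f (φ^[i] t) ∂μ = ∫ t, f t ∂μ := by
    intro i
    induction i with
    | zero => rfl
    | succ i ih =>
      rw [← ih]
      conv_rhs => rw [← h2]
      rw [integral_map hφ.continuous.aemeasurable
        (hci i).aestronglyMeasurable]
      rfl
  obtain ⟨B, hB⟩ : ∃ B, ∀ x, |f x| ≤ B := by
    obtain ⟨B, hB⟩ := (isCompact_range hf).isBounded.exists_norm_le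
    exact ⟨B, fun x => hB _ (Set.mem_range_self x)⟩
  have key : Tendsto (fun n => ∫ t, birkhoffAverage ℝ φ f n t ∂μ) atTop (𝓝 (∫ t, F t ∂μ)) := by
    refine tendsto_integral_of_dominated_convergence (fun _ => |B|) (fun n => ?_)
      (integrable_const _) (fun n => ?_) (Eventually.of_forall hF)
    · apply Continuous.aestronglyMeasurable
      unfold birkhoffAverage birkhoffSum
      exact (continuous_finsetSum _ fun i _ => hci i).const_smul ((n:ℝ)⁻¹)
    · refine Eventually.of_forall fun t => ?_
      simp only [birkhoffAverage, smul_eq_mul, norm_mul, norm_inv, Real.norm_eq_abs, Nat.abs_cast]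
      rcases Nat.eq_zero_or_pos n with rfl | hn
      · simp
      have hn' : (0:ℝ) < n := by exact_mod_cast hn
      rw [inv_mul_le_iff₀ hn']
      unfold birkhoffSum
      refine (Finset.abs_sum_le_sum_abs _ _).trans ?_
      calc _ ≤ ∑ i ∈ Finset.range n, |B| := Finset.sum_le_sum fun i _ =>
              ((hB _).trans (le_abs_self _))
        _ = _ := by simp
  refine tendsto_nhds_unique (tendsto_const_nhds.congr' ?_) key
  filter_upwards [eventually_gt_atTop 0] with n hn
  have hn' : (0:ℝ) < n := by exact_mod_cast hn
  simp only [birkhoffAverage, birkhoffSum, smul_eq_mul]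
  rw [integral_const_mul, integral_finsetSum _ (fun i _ => hi _ (hci i))]
  simp only [hit]
  simp
  field_simp

theorem aux_nonper {K : Type*} [MetricSpace K] [CompactSpace K] [ConnectedSpace K]
    [MeasurableSpace K] [BorelSpace K] (φ : K → K) (hφ : Isometry φ)
    (hmeagre : IsMeagre {k : K | ∃ p : ℕ, 0 < p ∧ φ^[p] k = k})
    (f : K → ℝ) (hf : Continuous f) (c : ℝ)
    (hlo : ∀ ε > 0, ∃ μ : Measure K, IsProbabilityMeasure μ ∧ Measure.map φ μ = μ ∧
      c - ε ≤ ∫ t, f t ∂μ)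
    (hhi : ∀ ε > 0, ∃ μ : Measure K, IsProbabilityMeasure μ ∧ Measure.map φ μ = μ ∧
      ∫ t, f t ∂μ ≤ c + ε) (ε : ℝ) (hε : 0 < ε) :
    ∃ x : K, (∀ p : ℕ, 0 < p → φ^[p] x ≠ x) ∧
      ∃ C, ∀ k : ℕ, |birkhoffSum φ f k x - k * c| ≤ ε * k + C := by
  choose F hF using fun x => aux_conv φ hφ f hf x
  have hFc : Continuous F := by
    rw [Metric.continuous_iff]
    intro b e he
    obtain ⟨δ, hδ, h⟩ := aux_equi φ hφ f hf (e/2) (by positivity)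
    refine ⟨δ, hδ, fun x hx => ?_⟩
    have h1 : |F x - F b| ≤ e / 2 :=
      le_of_tendsto ((hF x).sub (hF b)).abs (Eventually.of_forall fun n => (h _ _ hx n).le)
    rw [Real.dist_eq]; linarith
  have hi : ∀ (μ : Measure K) [IsProbabilityMeasure μ], Integrable F μ := fun μ _ =>
    hFc.integrable_of_hasCompactSupport (HasCompactSupport.of_compactSpace F)
  obtain ⟨x1, hx1⟩ : ∃ x, c - ε / 4 ≤ F x := by
    obtain ⟨μ, h1, h2, h3⟩ := hlo (ε/4) (by positivity)
    rw [aux_exists_ge φ hφ f hf F hF μ h1 h2 hFc] at h3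
    obtain ⟨x, hx⟩ := exists_integral_le (hi μ)
    exact ⟨x, h3.trans hx⟩
  obtain ⟨x2, hx2⟩ : ∃ x, F x ≤ c + ε / 4 := by
    obtain ⟨μ, h1, h2, h3⟩ := hhi (ε/4) (by positivity)
    rw [aux_exists_ge φ hφ f hf F hF μ h1 h2 hFc] at h3
    obtain ⟨x, hx⟩ := exists_le_integral (hi μ)
    exact ⟨x, hx.trans h3⟩
  obtain ⟨x0, hx0⟩ : ∃ x, |F x - c| ≤ ε / 4 := by
    by_cases h1 : F x1 ≤ c + ε / 4
    · exact ⟨x1, by rw [abs_le]; constructor <;> linarith⟩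
    by_cases h2 : c - ε / 4 ≤ F x2
    · exact ⟨x2, by rw [abs_le]; constructor <;> linarith⟩
    obtain ⟨x, hx⟩ := mem_range_of_exists_le_of_exists_ge hFc (c := c)
      ⟨x2, by linarith⟩ ⟨x1, by linarith⟩
    exact ⟨x, by rw [hx]; simp; positivity⟩
  have hd : Dense {k : K | ∃ p : ℕ, 0 < p ∧ φ^[p] k = k}ᶜ := dense_of_mem_residual hmeagre
  obtain ⟨x, hxo, hxn⟩ := hd.exists_mem_open (U := {x | |F x - c| < ε / 2})
    (isOpen_lt (by fun_prop) continuous_const) ⟨x0, by simp only [Set.mem_ofPred_eq]; linarith⟩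
  simp only [Set.mem_compl_iff, Set.mem_ofPred_eq, not_exists, not_and] at hxo hxn
  have hev : ∀ᶠ n in atTop, |birkhoffAverage ℝ φ f n x - c| < ε :=
    ((hF x).sub_const c).abs.eventually_lt_const (by linarith)
  obtain ⟨N, hN⟩ := eventually_atTop.1 hev
  refine ⟨x, by tauto, ∑ k ∈ Finset.range (N + 1), |birkhoffSum φ f k x - k * c|, fun k => ?_⟩
  by_cases hk : k < N + 1
  · have := Finset.single_le_sum (f := fun k : ℕ => |birkhoffSum φ f k x - k * c|)
      (fun _ _ => abs_nonneg _) (Finset.mem_range.2 hk)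
    have h2 : 0 ≤ ε * k := by positivity
    linarith
  · have h1 := hN k (by omega)
    have hk' : (0:ℝ) < k := by exact_mod_cast (by omega : 0 < k)
    have e : birkhoffSum φ f k x - k * c = k * (birkhoffAverage ℝ φ f k x - c) := by
      simp only [birkhoffAverage, smul_eq_mul]; field_simp
    have h2 : 0 ≤ ∑ k ∈ Finset.range (N + 1), |birkhoffSum φ f k x - k * c| :=
      Finset.sum_nonneg fun _ _ => abs_nonneg _
    rw [e, abs_mul, abs_of_pos hk']
    nlinarith

theorem iso_dist {K : Type*} [MetricSpace K] {ψ : K → K} (hψ : Isometry ψ) (n : ℕ) (x y : K) :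
    dist (ψ^[n] x) (ψ^[n] y) = dist x y := by
  induction n with
  | zero => rfl
  | succ n ih => rw [Function.iterate_succ_apply', Function.iterate_succ_apply', hψ.dist_eq, ih]

/-- Bounded by `M` in sup norm and in Hölder seminorm. -/
def HB {K : Type*} [MetricSpace K] (a : ℝ) (f : K → ℂ) (M : ℝ) : Prop :=
  (∀ x, ‖f x‖ ≤ M) ∧ ∀ x y, ‖f x - f y‖ ≤ M * dist x y ^ a

/-- The multiplicative cocycle. -/
noncomputable def cyc {K : Type*} (v : K → ℂ) (ψ : K → K) (n : ℕ) (x : K) : ℂ :=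
  ∏ i ∈ Finset.range n, v (ψ^[i] x)

theorem cyc_succ {K : Type*} (v : K → ℂ) (ψ : K → K) (n : ℕ) (x : K) :
    cyc v ψ (n + 1) x = cyc v ψ n x * v (ψ^[n] x) := Finset.prod_range_succ _ _

theorem cyc_succ' {K : Type*} (v : K → ℂ) (ψ : K → K) (n : ℕ) (x : K) :
    cyc v ψ (n + 1) x = v x * cyc v ψ n (ψ x) := by
  unfold cyc
  rw [Finset.prod_range_succ', mul_comm]
  rfl

theorem hol_cont {K : Type*} [MetricSpace K] {a : ℝ} (ha0 : 0 < a) {f : K → ℂ}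
    (hf : f ∈ HolSet a) : Continuous f := by
  obtain ⟨C, hC⟩ := hf
  rw [continuous_iff_continuousAt]
  intro b
  rw [ContinuousAt, tendsto_iff_norm_sub_tendsto_zero]
  have h : Tendsto (fun x => C * dist x b ^ a) (𝓝 b) (𝓝 (C * dist b b ^ a)) := by
    have : Continuous fun x => C * dist x b ^ a :=
      continuous_const.mul ((continuous_id.dist continuous_const).rpow_const fun _ => Or.inr ha0.le)
    exact this.tendsto b
  rw [dist_self, Real.zero_rpow ha0.ne', mul_zero] at h
  exact squeeze_zero (fun _ => norm_nonneg _) (fun x => hC x b) h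

theorem hol_HB {K : Type*} [MetricSpace K] [CompactSpace K] {a : ℝ} (ha0 : 0 < a) {f : K → ℂ}
    (hf : f ∈ HolSet a) : ∃ M, 0 < M ∧ HB a f M := by
  obtain ⟨B, hB⟩ := (isCompact_range (hol_cont ha0 hf)).isBounded.exists_norm_le
  obtain ⟨C, hC⟩ := hf
  refine ⟨max (max B C) 1, by positivity, fun x => ?_, fun x y => ?_⟩
  · exact (hB _ (Set.mem_range_self x)).trans ((le_max_left _ _).trans (le_max_left _ _))
  · refine (hC x y).trans ?_
    gcongr
    exact (le_max_right _ _).trans (le_max_left _ _)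

theorem HB.hol {K : Type*} [MetricSpace K] {a : ℝ} {f : K → ℂ} {M : ℝ} (h : HB a f M) :
    f ∈ HolSet a := ⟨M, h.2⟩

theorem HB.norm_le {K : Type*} [MetricSpace K] [Nonempty K] {a : ℝ} {f : K → ℂ} {M : ℝ}
    (h : HB a f M) : holderNorm a f ≤ 2 * M := by
  have hM : 0 ≤ M := (norm_nonneg _).trans (h.1 (Classical.arbitrary K))
  have h1 : supNorm f ≤ M := Real.sSup_le (by rintro _ ⟨x, rfl⟩; exact h.1 x) hM
  have h2 : sSup {r : ℝ | ∃ x y : K, x ≠ y ∧ r = ‖f x - f y‖ / dist x y ^ a} ≤ M := by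
    refine Real.sSup_le ?_ hM
    rintro _ ⟨x, y, hxy, rfl⟩
    have : 0 < dist x y ^ a := Real.rpow_pos_of_pos (dist_pos.2 hxy) a
    rw [div_le_iff₀ this]
    exact h.2 x y
  unfold holderNorm
  linarith

theorem HB.of_hol {K : Type*} [MetricSpace K] [CompactSpace K] {a : ℝ} (ha0 : 0 < a) {f : K → ℂ}
    (hf : f ∈ HolSet a) : HB a f (holderNorm a f) := by
  obtain ⟨M, hM0, hM⟩ := hol_HB ha0 hf
  have n1 : 0 ≤ supNorm f := Real.sSup_nonneg (by rintro _ ⟨x, rfl⟩; exact norm_nonneg _)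
  have n2 : 0 ≤ sSup {r : ℝ | ∃ x y : K, x ≠ y ∧ r = ‖f x - f y‖ / dist x y ^ a} :=
    Real.sSup_nonneg (by rintro _ ⟨x, y, _, rfl⟩; positivity)
  refine ⟨fun x => ?_, fun x y => ?_⟩
  · have : ‖f x‖ ≤ supNorm f :=
      le_csSup ⟨M, by rintro _ ⟨x, rfl⟩; exact hM.1 x⟩ (Set.mem_range_self x)
    unfold holderNorm
    linarith
  · by_cases hxy : x = y
    · subst hxy
      simp [Real.zero_rpow ha0.ne']
    have hp : 0 < dist x y ^ a := Real.rpow_pos_of_pos (dist_pos.2 hxy) a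
    rw [← div_le_iff₀ hp]
    have : ‖f x - f y‖ / dist x y ^ a ≤
        sSup {r : ℝ | ∃ x y : K, x ≠ y ∧ r = ‖f x - f y‖ / dist x y ^ a} := by
      refine le_csSup ⟨M, ?_⟩ ⟨x, y, hxy, rfl⟩
      rintro _ ⟨x, y, hxy, rfl⟩
      have : 0 < dist x y ^ a := Real.rpow_pos_of_pos (dist_pos.2 hxy) a
      rw [div_le_iff₀ this]
      exact hM.2 x y
    unfold holderNorm
    linarith

theorem HB.mul {K : Type*} [MetricSpace K] {a : ℝ} {f g : K → ℂ} {M N : ℝ} (hN : 0 ≤ N)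
    (hM : 0 ≤ M) (hf : HB a f M) (hg : HB a g N) : HB a (fun t => f t * g t) (2 * M * N) := by
  refine ⟨fun x => ?_, fun x y => ?_⟩
  · rw [norm_mul]
    have := mul_le_mul (hf.1 x) (hg.1 x) (norm_nonneg _) hM
    nlinarith [mul_nonneg hM hN]
  · have e : f x * g x - f y * g y = f x * (g x - g y) + (f x - f y) * g y := by ring
    rw [e]
    have hd : 0 ≤ dist x y ^ a := by positivity
    calc _ ≤ ‖f x‖ * ‖g x - g y‖ + ‖f x - f y‖ * ‖g y‖ := by
            refine (norm_add_le _ _).trans ?_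
            rw [norm_mul, norm_mul]
      _ ≤ M * (N * dist x y ^ a) + (M * dist x y ^ a) * N := by
            have h1 := hf.1 x
            have h2 := hg.2 x y
            have h3 := hf.2 x y
            have h4 := hg.1 y
            gcongr
      _ = _ := by ring

theorem HB.comp {K : Type*} [MetricSpace K] {a : ℝ} {f : K → ℂ} {M : ℝ} {ψ : K → K}
    (hψ : Isometry ψ) (hf : HB a f M) : HB a (fun t => f (ψ t)) M :=
  ⟨fun x => hf.1 _, fun x y => by rw [← hψ.dist_eq x y]; exact hf.2 _ _⟩

theorem cyc_hol {K : Type*} [MetricSpace K] {a : ℝ} (ψ : K → K) (hψ : Isometry ψ)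
    (v : K → ℂ) (V C ρ : ℝ) (hV : 0 ≤ V) (hC : 0 ≤ C) (hρ : 0 < ρ) (hv : HB a v V)
    (hb : ∀ n x, ‖cyc v ψ n x‖ ≤ C * ρ ^ n) (x y : K) (n m : ℕ) :
    ‖(cyc v ψ n x - cyc v ψ n y) * cyc v ψ m (ψ^[n] y)‖ ≤
      n * (C * C * V / ρ) * ρ ^ (n + m) * dist x y ^ a := by
  induction n generalizing m with
  | zero => simp [cyc]
  | succ n ih =>
    have e : (cyc v ψ (n + 1) x - cyc v ψ (n + 1) y) * cyc v ψ m (ψ^[n+1] y) =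
      cyc v ψ n x * (v (ψ^[n] x) - v (ψ^[n] y)) * cyc v ψ m (ψ^[n+1] y) +
      (cyc v ψ n x - cyc v ψ n y) * cyc v ψ (m + 1) (ψ^[n] y) := by
      rw [cyc_succ, cyc_succ, cyc_succ', ← Function.iterate_succ_apply' ψ]
      ring
    rw [e]
    have hd : 0 ≤ dist x y ^ a := by positivity
    have h1 := hb n x
    have h2 := hb m (ψ^[n+1] y)
    have h3 : ‖v (ψ^[n] x) - v (ψ^[n] y)‖ ≤ V * dist x y ^ a := by
      rw [← iso_dist hψ n x y]; exact hv.2 _ _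
    refine (norm_add_le _ _).trans ?_
    have h4 := ih (m + 1)
    have h5 : ‖cyc v ψ n x * (v (ψ^[n] x) - v (ψ^[n] y)) * cyc v ψ m (ψ^[n+1] y)‖ ≤
        (C * ρ ^ n) * (V * dist x y ^ a) * (C * ρ ^ m) := by
      rw [norm_mul, norm_mul]
      gcongr
    have e2 : (C * ρ ^ n) * (V * dist x y ^ a) * (C * ρ ^ m) =
      (C * C * V / ρ) * ρ ^ (n + 1 + m) * dist x y ^ a := by
      field_simp
      ring
    rw [e2] at h5
    rw [show n + (m + 1) = n + 1 + m by ring] at h4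
    push_cast
    linarith

theorem neumann {K : Type*} [MetricSpace K] {a : ℝ} (ψ : K → K) (hψ : Isometry ψ)
    (v : K → ℂ) (V C ρ : ℝ) (hV : 0 ≤ V) (hC : 0 ≤ C) (hρ : 0 < ρ) (hρ1 : ρ < 1) (hv : HB a v V)
    (hb : ∀ n x, ‖cyc v ψ n x‖ ≤ C * ρ ^ n) :
    ∃ D > 0, ∀ g M, 0 ≤ M → HB a g M → ∃ f, HB a f (D * M) ∧ ∀ x, f x - v x * f (ψ x) = g x := by
  set E := C * C * V / ρ with hE
  have hE0 : 0 ≤ E := by positivity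
  have s1 : Summable fun n : ℕ => ρ ^ n := summable_geometric_of_lt_one hρ.le hρ1
  have s2 : Summable fun n : ℕ => (n : ℝ) * ρ ^ n := by
    simpa using summable_pow_mul_geometric_of_norm_lt_one 1 (r := ρ)
      (by rwa [Real.norm_eq_abs, abs_of_pos hρ])
  let b : ℕ → ℝ := fun n => C * ρ ^ n + E * (n * ρ ^ n)
  have sb : Summable b := (s1.mul_left C).add (s2.mul_left E)
  have hb0 : ∀ n, 0 ≤ b n := fun n => by positivity
  have hD0 : 0 ≤ ∑' n, b n := tsum_nonneg hb0
  refine ⟨∑' n, b n + 1, by positivity, fun g M hM hg => ?_⟩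
  have t1 : ∀ n x, ‖cyc v ψ n x * g (ψ^[n] x)‖ ≤ b n * M := by
    intro n x
    rw [norm_mul]
    have h1 := hb n x
    have h2 := hg.1 (ψ^[n] x)
    have h3 : C * ρ ^ n ≤ b n := by
      have : 0 ≤ E * (n * ρ ^ n) := by positivity
      simp only [b]; linarith
    have := hb0 n
    calc _ ≤ (C * ρ ^ n) * M := by gcongr
      _ ≤ _ := by gcongr
  have t2 : ∀ n x y, ‖cyc v ψ n x * g (ψ^[n] x) - cyc v ψ n y * g (ψ^[n] y)‖ ≤
      b n * (M * dist x y ^ a) := by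
    intro n x y
    have e : cyc v ψ n x * g (ψ^[n] x) - cyc v ψ n y * g (ψ^[n] y) =
      cyc v ψ n x * (g (ψ^[n] x) - g (ψ^[n] y)) + (cyc v ψ n x - cyc v ψ n y) * g (ψ^[n] y) := by
      ring
    rw [e]
    refine (norm_add_le _ _).trans ?_
    rw [norm_mul, norm_mul]
    have h1 := hb n x
    have h2 := hg.1 (ψ^[n] y)
    have h3 : ‖g (ψ^[n] x) - g (ψ^[n] y)‖ ≤ M * dist x y ^ a := by
      rw [← iso_dist hψ n x y]; exact hg.2 _ _
    have h4 : ‖cyc v ψ n x - cyc v ψ n y‖ ≤ n * E * ρ ^ n * dist x y ^ a := by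
      simpa [cyc] using cyc_hol ψ hψ v V C ρ hV hC hρ hv hb x y n 0
    have hd : 0 ≤ dist x y ^ a := by positivity
    calc _ ≤ (C * ρ ^ n) * (M * dist x y ^ a) + (n * E * ρ ^ n * dist x y ^ a) * M := by gcongr
      _ = _ := by simp only [b]; ring
  have hs : ∀ x, Summable fun n => cyc v ψ n x * g (ψ^[n] x) := fun x =>
    Summable.of_norm_bounded (sb.mul_right M) fun n => t1 n x
  refine ⟨fun x => ∑' n, cyc v ψ n x * g (ψ^[n] x), ⟨fun x => ?_, fun x y => ?_⟩, fun x => ?_⟩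
  · refine (tsum_of_norm_bounded (sb.mul_right M).hasSum fun n => t1 n x).trans ?_
    rw [tsum_mul_right]
    gcongr; linarith
  · rw [← (hs x).tsum_sub (hs y)]
    refine (tsum_of_norm_bounded (sb.mul_right _).hasSum fun n => t2 n x y).trans ?_
    rw [tsum_mul_right, mul_assoc]
    have hd : 0 ≤ dist x y ^ a := by positivity
    gcongr; linarith
  · simp only
    rw [(hs x).tsum_eq_zero_add, ← tsum_mul_left]
    have : ∀ n, cyc v ψ (n + 1) x * g (ψ^[n+1] x) = v x * (cyc v ψ n (ψ x) * g (ψ^[n] (ψ x))) := by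
      intro n
      rw [cyc_succ', Function.iterate_succ_apply]
      ring
    simp only [this]
    simp [cyc]

theorem neumann_unique {K : Type*} (ψ : K → K) (v : K → ℂ) (C ρ : ℝ) (hρ : 0 < ρ) (hρ1 : ρ < 1)
    (hb : ∀ n x, ‖cyc v ψ n x‖ ≤ C * ρ ^ n) (f : K → ℂ) (M : ℝ) (hM : ∀ x, ‖f x‖ ≤ M)
    (h : ∀ x, f x = v x * f (ψ x)) : f = 0 := by
  funext x
  have key : ∀ n, f x = cyc v ψ n x * f (ψ^[n] x) := by
    intro n
    induction n with
    | zero => simp [cyc]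
    | succ n ih =>
      rw [ih, h (ψ^[n] x), cyc_succ, Function.iterate_succ_apply']
      ring
  have hle : ∀ n, ‖f x‖ ≤ C * ρ ^ n * M := by
    intro n
    rw [key n, norm_mul]
    have h1 := hb n x
    have h2 := hM (ψ^[n] x)
    have : 0 ≤ M := (norm_nonneg _).trans h2
    exact mul_le_mul h1 h2 (norm_nonneg _) ((norm_nonneg _).trans h1)
  have hl : Tendsto (fun n => C * ρ ^ n * M) atTop (𝓝 (C * 0 * M)) :=
    ((tendsto_pow_atTop_nhds_zero_of_lt_one hρ.le hρ1).const_mul C).mul_const M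
  have := ge_of_tendsto' hl hle
  simpa using this

theorem snow {K : Type*} [MetricSpace K] {a : ℝ} (ha0 : 0 < a) (ha1 : a ≤ 1) (x y z : K) :
    dist x z ^ a ≤ dist x y ^ a + dist y z ^ a := by
  refine (Real.rpow_le_rpow dist_nonneg (dist_triangle x y z) ha0.le).trans ?_
  exact Real.rpow_add_le_add_rpow dist_nonneg dist_nonneg ha0.le ha1

theorem disj_sum {K : Type*} (n : ℕ) (hn : 0 < n) (G : ℕ → K → ℂ)
    (hdis : ∀ z, ∀ i < n, ∀ j < n, i ≠ j → G i z = 0 ∨ G j z = 0) :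
    ∀ z, ∃ p < n, (∀ k < n, k ≠ p → G k z = 0) ∧ ∑ k ∈ Finset.range n, G k z = G p z := by
  intro z
  have : ∃ p < n, (∀ k < n, k ≠ p → G k z = 0) := by
    by_cases h : ∃ p < n, G p z ≠ 0
    · obtain ⟨p, hp, hpz⟩ := h
      exact ⟨p, hp, fun k hk hkp => (hdis z k hk p hp hkp).resolve_right hpz⟩
    · push Not at h
      exact ⟨0, hn, fun k hk _ => h k hk⟩
  obtain ⟨p, hp, h⟩ := this
  refine ⟨p, hp, h, ?_⟩
  refine Finset.sum_eq_single p (fun k hk hkp => h k (Finset.mem_range.1 hk) hkp) ?_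
  intro h'
  exact absurd (Finset.mem_range.2 hp) h'

theorem disj_HB {K : Type*} [MetricSpace K] {a : ℝ} (n : ℕ) (hn : 0 < n) (G : ℕ → K → ℂ)
    (hdis : ∀ z, ∀ i < n, ∀ j < n, i ≠ j → G i z = 0 ∨ G j z = 0) (A E : ℝ)
    (hA : ∀ k < n, ∀ z, ‖G k z‖ ≤ A) (hA0 : 0 ≤ A) (hE0 : 0 ≤ E)
    (hE : ∀ k < n, ∀ z z', ‖G k z - G k z'‖ ≤ E * dist z z' ^ a) :
    HB a (fun z => ∑ k ∈ Finset.range n, G k z) (A + 2 * E) := by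
  have hs := disj_sum n hn G hdis
  refine ⟨fun z => ?_, fun z z' => ?_⟩
  · obtain ⟨p, hp, -, h⟩ := hs z
    simp only [h]
    linarith [hA p hp z]
  · obtain ⟨p, hp, h1, h⟩ := hs z
    obtain ⟨p', hp', h1', h'⟩ := hs z'
    have hd : 0 ≤ dist z z' ^ a := by positivity
    simp only [h, h']
    have hAd : 0 ≤ A * dist z z' ^ a := by positivity
    have hEd : 0 ≤ E * dist z z' ^ a := by positivity
    by_cases hpp : p = p'
    · subst hpp
      have := hE p hp z z'
      linarith
    · have e : G p z - G p' z' = (G p z - G p z') + (G p' z - G p' z') := by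
        rw [h1' p hp hpp, h1 p' hp' (Ne.symm hpp)]; ring
      rw [e]
      have := norm_add_le (G p z - G p z') (G p' z - G p' z')
      have := hE p hp z z'
      have := hE p' hp' z z'
      linarith

theorem bump_contra {K : Type*} [MetricSpace K] [CompactSpace K] [ConnectedSpace K]
    {a : ℝ} (ha0 : 0 < a) (ha1 : a ≤ 1) (φ : K → K) (hφ : Isometry φ) (y : K)
    (hy : ∀ p : ℕ, 0 < p → φ^[p] y ≠ y) (w : K → ℂ) (W : ℝ) (hW : 0 < W) (hw : HB a w W)
    (lam : ℂ) (n : ℕ) (F : ℕ → ℂ) (B η Q : ℝ) (hB : 0 < B) (hη : 0 ≤ η) (hQ : 0 < Q)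
    (hηQ : η * (16 * Q) ≤ 1)
    (hF0 : F 0 = 0) (hFn : F n = 0) (hFB : ∀ k ≤ n, ‖F k‖ ≤ B) (k0 : ℕ) (hk0 : k0 < n)
    (hFk : ‖F k0‖ = B) (hres : ∀ k < n, ‖lam * F k - w (φ^[k] y) * F (k + 1)‖ ≤ η * B)
    (hbd : ∀ f ∈ HolSet (K := K) a,
      holderNorm a f ≤ Q * holderNorm a (fun t => lam * f t - w t * f (φ t))) : False := by
  have hdist : ∀ i < n, ∀ j < n, i ≠ j → φ^[i] y ≠ φ^[j] y := by
    have key : ∀ i j, i < j → φ^[i] y ≠ φ^[j] y := by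
      intro i j hij h
      obtain ⟨d, rfl⟩ := Nat.exists_eq_add_of_lt hij
      rw [show i + d + 1 = i + (d + 1) by ring, Function.iterate_add_apply] at h
      exact hy (d + 1) (by omega) (hφ.injective.iterate i h).symm
    intro i _ j _ hij
    rcases lt_or_gt_of_ne hij with h | h
    · exact key i j h
    · exact (key j i h).symm
  obtain ⟨D, hD0, hD1, hDs, hDd⟩ : ∃ D : ℝ, 0 < D ∧ D < 1 ∧ D < 1 / (40 * Q * W) ∧
      ∀ i ∈ Finset.range n, ∀ j ∈ Finset.range n, i ≠ j →
        2 * D ≤ dist (φ^[i] y) (φ^[j] y) ^ a := by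
    have h1 : ∀ c : ℝ, 0 < c → ∀ᶠ D in 𝓝[>] (0:ℝ), D < c := fun c hc =>
      (eventually_lt_nhds hc).filter_mono nhdsWithin_le_nhds
    have h2 : ∀ᶠ D in 𝓝[>] (0:ℝ), ∀ i ∈ Finset.range n, ∀ j ∈ Finset.range n, i ≠ j →
        2 * D ≤ dist (φ^[i] y) (φ^[j] y) ^ a := by
      rw [Filter.eventually_all_finset]
      intro i hi
      rw [Filter.eventually_all_finset]
      intro j hj
      by_cases hij : i = j
      · simp [hij]
      have hp : 0 < dist (φ^[i] y) (φ^[j] y) ^ a := Real.rpow_pos_of_pos (dist_pos.2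
        (hdist i (Finset.mem_range.1 hi) j (Finset.mem_range.1 hj) hij)) a
      filter_upwards [h1 _ (half_pos hp)] with D hD _
      linarith
    obtain ⟨D, h⟩ := ((h1 1 one_pos).and ((h1 (1 / (40 * Q * W)) (by positivity)).and
      (h2.and self_mem_nhdsWithin))).exists
    exact ⟨D, h.2.2.2, h.1, h.2.1, h.2.2.1⟩
  let h : ℕ → K → ℝ := fun k z => max 0 (1 - dist (φ^[k] y) z ^ a / D)
  have hh0 : ∀ k z, 0 ≤ h k z := fun k z => le_max_left _ _
  have hh1 : ∀ k z, h k z ≤ 1 := fun k z => max_le zero_le_one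
    (by have : 0 ≤ dist (φ^[k] y) z ^ a / D := by positivity
        linarith)
  have hhz : ∀ k z, h k z = 0 ∨ dist (φ^[k] y) z ^ a < D := by
    intro k z
    by_cases hc : dist (φ^[k] y) z ^ a < D
    · exact Or.inr hc
    · left
      refine max_eq_left ?_
      rw [sub_nonpos, one_le_div hD0]
      linarith
  have hhl : ∀ k z z', |h k z - h k z'| ≤ dist z z' ^ a / D := by
    intro k z z'
    have h1 : |h k z - h k z'| ≤
        |(1 - dist (φ^[k] y) z ^ a / D) - (1 - dist (φ^[k] y) z' ^ a / D)| := by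
      have := abs_max_sub_max_le_max 0 (1 - dist (φ^[k] y) z ^ a / D) 0
        (1 - dist (φ^[k] y) z' ^ a / D)
      simpa using this
    refine h1.trans ?_
    have e : (1 - dist (φ^[k] y) z ^ a / D) - (1 - dist (φ^[k] y) z' ^ a / D) =
      (dist (φ^[k] y) z' ^ a - dist (φ^[k] y) z ^ a) / D := by ring
    rw [e, abs_div, abs_of_pos hD0]
    gcongr
    have s1 := snow ha0 ha1 (φ^[k] y) z z'
    have s2 := snow ha0 ha1 (φ^[k] y) z' z
    rw [dist_comm z' z] at s2
    rw [abs_le]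
    constructor <;> linarith
  have hdis : ∀ z, ∀ i < n, ∀ j < n, i ≠ j → h i z = 0 ∨ h j z = 0 := by
    intro z i hi j hj hij
    rcases hhz i z with h1 | h1
    · exact Or.inl h1
    rcases hhz j z with h2 | h2
    · exact Or.inr h2
    have h3 := hDd i (Finset.mem_range.2 hi) j (Finset.mem_range.2 hj) hij
    have s := snow ha0 ha1 (φ^[i] y) z (φ^[j] y)
    rw [dist_comm z] at s
    linarith
  have hshift : ∀ k z, h (k + 1) (φ z) = h k z := by
    intro k z
    simp only [h, Function.iterate_succ_apply', hφ.dist_eq]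
  have hn : 0 < n := by omega
  let f : K → ℂ := fun z => ∑ k ∈ Finset.range n, F k * (h k z : ℂ)
  let g : K → ℂ := fun z => ∑ k ∈ Finset.range n, (lam * F k - w z * F (k + 1)) * (h k z : ℂ)
  have hTf : (fun t => lam * f t - w t * f (φ t)) = g := by
    funext t
    obtain ⟨m, rfl⟩ : ∃ m, n = m + 1 := ⟨n - 1, by omega⟩
    have e1 : f (φ t) = ∑ k ∈ Finset.range (m + 1), F (k + 1) * (h k t : ℂ) := by
      simp only [f]
      rw [Finset.sum_range_succ', Finset.sum_range_succ, hF0, hFn]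
      simp only [hshift]
      ring
    rw [e1]
    simp only [f, g, Finset.mul_sum, ← Finset.sum_sub_distrib]
    refine Finset.sum_congr rfl fun k _ => ?_
    ring
  have hfHB : HB a f (B + 2 * (B / D)) := by
    refine disj_HB n hn (fun k z => F k * (h k z : ℂ)) ?_ B (B / D) ?_ hB.le (by positivity) ?_
    · intro z i hi j hj hij
      rcases hdis z i hi j hj hij with h1 | h1 <;> simp [h1]
    · intro k hk z
      rw [norm_mul, Complex.norm_real, Real.norm_eq_abs, abs_of_nonneg (hh0 k z)]
      have := mul_le_mul (hFB k hk.le) (hh1 k z) (hh0 k z) hB.le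
      linarith
    · intro k hk z z'
      rw [← mul_sub, norm_mul, ← Complex.ofReal_sub, Complex.norm_real, Real.norm_eq_abs]
      have := mul_le_mul (hFB k hk.le) (hhl k z z') (abs_nonneg _) hB.le
      refine this.trans (le_of_eq ?_)
      ring
  have hv : ∀ k < n, ∀ z, dist (φ^[k] y) z ^ a < D →
      ‖lam * F k - w z * F (k + 1)‖ ≤ B * (η + W * D) := by
    intro k hk z hz
    have e : lam * F k - w z * F (k + 1) = (lam * F k - w (φ^[k] y) * F (k + 1)) +
      (w (φ^[k] y) - w z) * F (k + 1) := by ring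
    rw [e]
    refine (norm_add_le _ _).trans ?_
    have h1 := hres k hk
    have h2 : ‖(w (φ^[k] y) - w z) * F (k + 1)‖ ≤ (W * D) * B := by
      rw [norm_mul]
      have := hw.2 (φ^[k] y) z
      have h3 : ‖w (φ^[k] y) - w z‖ ≤ W * D := this.trans (by gcongr)
      have := hFB (k + 1) hk
      gcongr
    linarith
  have hWD : 0 ≤ B * (η + W * D) := by positivity
  have hgHB : HB a g (B * (η + W * D) + 2 * (B * (η / D + 2 * W))) := by
    refine disj_HB n hn (fun k z => (lam * F k - w z * F (k + 1)) * (h k z : ℂ)) ?_ _ _ ?_ hWD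
      (by positivity) ?_
    · intro z i hi j hj hij
      rcases hdis z i hi j hj hij with h1 | h1 <;> simp [h1]
    · intro k hk z
      rcases hhz k z with h1 | h1
      · simpa [h1] using hWD
      rw [norm_mul, Complex.norm_real, Real.norm_eq_abs, abs_of_nonneg (hh0 k z)]
      have := mul_le_mul (hv k hk z h1) (hh1 k z) (hh0 k z) hWD
      linarith
    · intro k hk
      have main : ∀ z z', dist (φ^[k] y) z ^ a < D →
          ‖(lam * F k - w z * F (k + 1)) * (h k z : ℂ) -
            (lam * F k - w z' * F (k + 1)) * (h k z' : ℂ)‖ ≤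
            B * (η / D + 2 * W) * dist z z' ^ a := by
        intro z z' hz
        have e : (lam * F k - w z * F (k + 1)) * (h k z : ℂ) -
            (lam * F k - w z' * F (k + 1)) * (h k z' : ℂ) =
          (lam * F k - w z * F (k + 1)) * ((h k z - h k z' : ℝ) : ℂ) -
          (w z - w z') * F (k + 1) * (h k z' : ℂ) := by push_cast; ring
        rw [e]
        refine (norm_sub_le _ _).trans ?_
        rw [norm_mul, norm_mul, norm_mul, Complex.norm_real, Real.norm_eq_abs, Complex.norm_real,
          Real.norm_eq_abs, abs_of_nonneg (hh0 k z')]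
        have h1 := hv k hk z hz
        have h2 := hhl k z z'
        have h3 := hw.2 z z'
        have h4 := hFB (k + 1) hk
        have h5 := hh1 k z'
        have h6 := hh0 k z'
        calc _ ≤ (B * (η + W * D)) * (dist z z' ^ a / D) + (W * dist z z' ^ a) * B * 1 := by gcongr
          _ = _ := by field_simp; ring
      intro z z'
      rcases hhz k z with h1 | h1
      · rcases hhz k z' with h2 | h2
        · simp only [h1, h2]
          simp
          positivity
        · rw [norm_sub_rev, dist_comm]
          exact main z' z h2
      · exact main z z' h1
  have hN := hbd f hfHB.hol
  rw [hTf] at hN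
  have hNg := hgHB.norm_le
  have hNf : B / D ≤ holderNorm a f := by
    have hnt : Nontrivial K := ⟨⟨_, _, hy 1 one_pos⟩⟩
    set p := φ^[k0] y with hp
    have hev : ∀ᶠ q in 𝓝[≠] p, dist p q ^ a < D ∧ q ≠ p := by
      refine Filter.Eventually.and ?_ self_mem_nhdsWithin
      have hc : Continuous fun q => dist p q ^ a :=
        (continuous_const.dist continuous_id).rpow_const fun _ => Or.inr ha0.le
      have ht := hc.tendsto p
      rw [dist_self, Real.zero_rpow ha0.ne'] at ht
      exact (ht.eventually_lt_const hD0).filter_mono nhdsWithin_le_nhds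
    obtain ⟨q, hq, hqp⟩ := hev.exists
    have hval : ∀ z, dist p z ^ a < D → f z = F k0 * ((1 - dist p z ^ a / D : ℝ) : ℂ) := by
      intro z hz
      have hpos : 0 < 1 - dist p z ^ a / D := by rw [sub_pos, div_lt_one hD0]; exact hz
      have hk : h k0 z = 1 - dist p z ^ a / D := max_eq_right hpos.le
      simp only [f]
      rw [Finset.sum_eq_single k0]
      · rw [hk]
      · intro k hk' hkk
        rcases hdis z k (Finset.mem_range.1 hk') k0 hk0 hkk with h1 | h1
        · simp [h1]
        · rw [hk] at h1; linarith
      · intro h'; exact absurd (Finset.mem_range.2 hk0) h'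
    have hpp : dist p p ^ a = 0 := by rw [dist_self, Real.zero_rpow ha0.ne']
    have hpq : 0 < dist p q ^ a := Real.rpow_pos_of_pos (dist_pos.2 (Ne.symm hqp)) a
    have h1 := (HB.of_hol ha0 hfHB.hol).2 p q
    rw [hval p (by rw [hpp]; exact hD0), hval q hq, hpp, ← mul_sub, ← Complex.ofReal_sub,
      norm_mul, hFk, Complex.norm_real, Real.norm_eq_abs] at h1
    have e : (1 - 0 / D - (1 - dist p q ^ a / D)) = dist p q ^ a / D := by ring
    rw [e, abs_of_pos (by positivity)] at h1
    have e2 : B * (dist p q ^ a / D) = B / D * dist p q ^ a := by ring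
    rw [e2] at h1
    exact le_of_mul_le_mul_right h1 hpq
  have hfin : B / D ≤ Q * (2 * (B * (η + W * D) + 2 * (B * (η / D + 2 * W)))) :=
    hNf.trans (hN.trans (by gcongr))
  rw [div_le_iff₀ hD0] at hfin
  have e : Q * (2 * (B * (η + W * D) + 2 * (B * (η / D + 2 * W)))) * D =
    B * (2 * Q * (η * D + W * D * D + 2 * η + 4 * W * D)) := by
    field_simp; ring
  rw [e] at hfin
  have h1 : 1 ≤ 2 * Q * (η * D + W * D * D + 2 * η + 4 * W * D) := by
    by_contra hcon
    push Not at hcon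
    nlinarith
  rw [lt_div_iff₀ (by positivity)] at hDs
  have h2 : η * D ≤ η := by nlinarith
  have h3 : W * D * D ≤ W * D := by
    have : 0 ≤ W * D := by positivity
    nlinarith
  have h4 : 2 * Q * (η * D + W * D * D + 2 * η + 4 * W * D) ≤ 2 * Q * (3 * η + 5 * (W * D)) := by
    exact mul_le_mul_of_nonneg_left (by linarith) (by positivity)
  nlinarith

theorem seq_contra {K : Type*} [MetricSpace K] [CompactSpace K] [ConnectedSpace K]
    {a : ℝ} (ha0 : 0 < a) (ha1 : a ≤ 1) (φ : K → K) (hφ : Isometry φ) (y : K)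
    (hy : ∀ p : ℕ, 0 < p → φ^[p] y ≠ y) (w : K → ℂ) (W : ℝ) (hW : 0 < W) (hw : HB a w W)
    (hwne : ∀ t, w t ≠ 0)
    (lam : ℂ) (hlam : lam ≠ 0) (Q ε C : ℝ) (hQ : 0 < Q) (hε : 0 < ε) (hε1 : ε ≤ 1)
    (hεQ : (4 * ε * ‖lam‖) * (16 * Q) ≤ 1)
    (hgr : ∀ k : ℕ, |birkhoffSum φ (fun t => Real.log ‖w t‖) k y - k * Real.log ‖lam‖| ≤
      ε / 8 * k + C)
    (hbd : ∀ f ∈ HolSet (K := K) a,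
      holderNorm a f ≤ Q * holderNorm a (fun t => lam * f t - w t * f (φ t))) : False := by
  have hl : 0 < ‖lam‖ := norm_pos_iff.2 hlam
  have hC : 0 ≤ C := by have := hgr 0; simpa using this
  let α : ℕ → ℂ := fun k => lam ^ k / cyc w φ k y
  have hcne : ∀ k, cyc w φ k y ≠ 0 := fun k => Finset.prod_ne_zero_iff.2 fun i _ => hwne _
  have hα : ∀ k, w (φ^[k] y) * α (k + 1) = lam * α k := by
    intro k
    simp only [α, cyc_succ]
    have h1 := hcne k
    have h2 := hwne (φ^[k] y)
    field_simp
    ring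
  have hαn : ∀ k, ‖α k‖ = Real.exp (k * Real.log ‖lam‖ -
      birkhoffSum φ (fun t => Real.log ‖w t‖) k y) := by
    intro k
    simp only [α, norm_div, norm_pow, cyc, norm_prod, birkhoffSum]
    rw [Real.exp_sub, Real.exp_nat_mul, Real.exp_log hl, Real.exp_sum]
    congr 1
    refine Finset.prod_congr rfl fun i _ => ?_
    rw [Real.exp_log (norm_pos_iff.2 (hwne _))]
  have hα1 : ∀ k : ℕ, ‖α k‖ ≤ Real.exp (ε / 8 * k + C) := by
    intro k
    rw [hαn]
    have := hgr k
    rw [abs_le] at this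
    gcongr
    linarith
  have hα2 : ∀ k : ℕ, Real.exp (-(ε / 8 * k + C)) ≤ ‖α k‖ := by
    intro k
    rw [hαn]
    have := hgr k
    rw [abs_le] at this
    gcongr
    linarith
  obtain ⟨L, hL⟩ := exists_nat_ge ((4 * C + 2) / ε)
  rw [div_le_iff₀ hε] at hL
  let e : ℕ → ℝ := fun k => Real.exp (ε * (L - |(k:ℝ) - L|))
  let F : ℕ → ℂ := fun k => ((e k - 1 : ℝ) : ℂ) * α k
  have he1 : ∀ k ≤ 2 * L, 1 ≤ e k := by
    intro k hk
    have hk' : (k:ℝ) ≤ 2 * L := by exact_mod_cast hk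
    refine Real.one_le_exp ?_
    have : |(k:ℝ) - L| ≤ L := by
      rw [abs_le]; constructor <;> linarith [Nat.cast_nonneg (α := ℝ) k]
    exact mul_nonneg hε.le (by linarith)
  have hFn : ∀ k ≤ 2 * L, ‖F k‖ = (e k - 1) * ‖α k‖ := by
    intro k hk
    simp only [F]
    rw [norm_mul, Complex.norm_real, Real.norm_eq_abs, abs_of_nonneg (by linarith [he1 k hk])]
  have hF0 : F 0 = 0 := by simp [F, e]
  have hF2 : F (2 * L) = 0 := by
    have : |((2 * L : ℕ) : ℝ) - L| = L := by
      push_cast; rw [show (2 * (L:ℝ) - L) = L by ring]; exact Nat.abs_cast L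
    simp only [F, e, this]
    simp
  have hst : ∀ k, |e k - e (k + 1)| ≤ 2 * ε * e k := by
    intro k
    set t := ε * (|(k:ℝ) - L| - |((k + 1 : ℕ):ℝ) - L|) with ht
    have htl : |t| ≤ ε := by
      rw [ht, abs_mul, abs_of_pos hε]
      have h1 := abs_abs_sub_abs_le ((k:ℝ) - L) (((k + 1 : ℕ):ℝ) - L)
      have h2 : |((k:ℝ) - L) - (((k + 1 : ℕ):ℝ) - L)| = 1 := by
        push_cast
        rw [show ((k:ℝ) - L) - ((k:ℝ) + 1 - L) = -1 by ring]; simp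
      rw [h2] at h1
      nlinarith
    have e1 : e (k + 1) = e k * Real.exp t := by
      simp only [e, ← Real.exp_add, ht]
      congr 1; ring
    have h3 := Real.abs_exp_sub_one_le (htl.trans hε1)
    have e2 : e k - e (k + 1) = -(e k * (Real.exp t - 1)) := by rw [e1]; ring
    have hep : 0 < e k := Real.exp_pos _
    rw [e2, abs_neg, abs_mul, abs_of_pos hep]
    nlinarith
  obtain ⟨k0, hk0m, hk0⟩ := Finset.exists_max_image (Finset.range (2 * L + 1)) (fun k => ‖F k‖)
    ⟨0, by simp⟩
  rw [Finset.mem_range] at hk0m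
  set B := ‖F k0‖ with hBdef
  have hFB : ∀ k ≤ 2 * L, ‖F k‖ ≤ B := fun k hk => hk0 k (Finset.mem_range.2 (by omega))
  have hbig : ∀ k ≤ 2 * L, ‖α k‖ ≤ B := by
    intro k hk
    have hk' : (k:ℝ) ≤ 2 * L := by exact_mod_cast hk
    refine le_trans ?_ (hFB L (by omega))
    rw [hFn L (by omega)]
    have h1 := hα1 k
    have h2 := hα2 L
    have heL : e L = Real.exp (ε * L) := by simp [e]
    have h3 : Real.exp (3 * (ε * L) / 8 + 2 * C) ≤ e L - 1 := by
      rw [heL]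
      set s := 3 * (ε * L) / 8 + 2 * C with hs
      have hs0 : 0 ≤ s := by positivity
      have e1 : Real.exp (ε * L) = Real.exp s * Real.exp (ε * L - s) := by
        rw [← Real.exp_add]; congr 1; ring
      have h4 := Real.add_one_le_exp (ε * L - s)
      have h5 := Real.one_le_exp hs0
      have h6 : 1 ≤ ε * L - s := by rw [hs]; linarith
      rw [e1]
      nlinarith
    calc ‖α k‖ ≤ Real.exp (ε / 8 * k + C) := h1
      _ ≤ Real.exp (3 * (ε * L) / 8 + 2 * C) * Real.exp (-(ε / 8 * L + C)) := by
        rw [← Real.exp_add]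
        refine Real.exp_le_exp.2 ?_
        nlinarith [mul_le_mul_of_nonneg_left hk' hε.le]
      _ ≤ (e L - 1) * ‖α L‖ := mul_le_mul h3 h2 (Real.exp_pos _).le
        ((Real.exp_pos _).le.trans h3)
  have hB : 0 < B := lt_of_lt_of_le (by rw [hαn]; exact Real.exp_pos _) (hbig 0 (by omega))
  have hk0' : k0 < 2 * L := by
    rcases Nat.lt_or_ge k0 (2 * L) with h | h
    · exact h
    · have : k0 = 2 * L := by omega
      rw [hBdef, this, hF2] at hB
      simp at hB
  refine bump_contra ha0 ha1 φ hφ y hy w W hW hw lam (2 * L) F B (4 * ε * ‖lam‖) Q hB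
    (by positivity) hQ hεQ hF0 hF2 hFB k0 hk0' rfl ?_ hbd
  intro k hk
  have e1 : lam * F k - w (φ^[k] y) * F (k + 1) = lam * α k * ((e k - e (k + 1) : ℝ) : ℂ) := by
    have := hα k
    simp only [F]
    push_cast
    linear_combination (1 - (e (k + 1) : ℂ)) * this
  rw [e1, norm_mul, norm_mul, Complex.norm_real, Real.norm_eq_abs]
  have h1 := hst k
  have h2 : e k * ‖α k‖ ≤ 2 * B := by
    have := hFB k hk.le
    rw [hFn k hk.le] at this
    linarith [hbig k hk.le]
  calc ‖lam‖ * ‖α k‖ * |e k - e (k + 1)| ≤ ‖lam‖ * ‖α k‖ * (2 * ε * e k) := by gcongr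
    _ = (2 * ε * ‖lam‖) * (e k * ‖α k‖) := by ring
    _ ≤ (2 * ε * ‖lam‖) * (2 * B) := by gcongr
    _ = _ := by ring

theorem HB.const_mul {K : Type*} [MetricSpace K] {a : ℝ} {f : K → ℂ} {M : ℝ} (c : ℂ)
    (hf : HB a f M) : HB a (fun t => c * f t) (‖c‖ * M) := by
  refine ⟨fun x => ?_, fun x y => ?_⟩
  · rw [norm_mul]
    have := hf.1 x
    gcongr
  · rw [← mul_sub, norm_mul, mul_assoc]
    have := hf.2 x y
    gcongr

theorem HB.sub {K : Type*} [MetricSpace K] {a : ℝ} {f g : K → ℂ} {M N : ℝ}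
    (hf : HB a f M) (hg : HB a g N) : HB a (fun t => f t - g t) (M + N) := by
  refine ⟨fun x => ?_, fun x y => ?_⟩
  · have := hf.1 x
    have := hg.1 x
    have := norm_sub_le (f x) (g x)
    linarith
  · have e : f x - g x - (f y - g y) = (f x - f y) - (g x - g y) := by ring
    have := hf.2 x y
    have := hg.2 x y
    have := norm_sub_le (f x - f y) (g x - g y)
    rw [e]
    linarith

theorem decay {K : Type*} [MetricSpace K] [CompactSpace K] [MeasurableSpace K] [BorelSpace K]
    (ψ : K → K) (hψ : Isometry ψ) (v : K → ℂ) (f : K → ℝ) (hf : Continuous f)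
    (hvf : ∀ t, ‖v t‖ ≤ Real.exp (f t)) (c : ℝ) (hc0 : c < 0)
    (hc : ∀ μ : Measure K, IsProbabilityMeasure μ → Measure.map ψ μ = μ → ∫ t, f t ∂μ ≤ c) :
    ∃ C ρ : ℝ, 0 ≤ C ∧ 0 < ρ ∧ ρ < 1 ∧ ∀ n x, ‖cyc v ψ n x‖ ≤ C * ρ ^ n := by
  obtain ⟨C, hC⟩ := aux_upper ψ hψ f hf c hc (-c/2) (by linarith)
  refine ⟨Real.exp C, Real.exp (c/2), (Real.exp_pos _).le, Real.exp_pos _,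
    (by rw [← Real.exp_zero]; exact Real.exp_lt_exp.2 (by linarith)), fun n x => ?_⟩
  have h1 : ‖cyc v ψ n x‖ ≤ Real.exp (birkhoffSum ψ f n x) := by
    simp only [cyc, birkhoffSum, norm_prod, Real.exp_sum]
    exact Finset.prod_le_prod (fun _ _ => norm_nonneg _) fun _ _ => hvf _
  refine h1.trans ?_
  rw [← Real.exp_nat_mul, ← Real.exp_add]
  refine Real.exp_le_exp.2 ((hC n x).trans (le_of_eq ?_))
  ring

theorem hol_T {K : Type*} [MetricSpace K] [CompactSpace K] {a : ℝ} (ha0 : 0 < a)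
    (φ : K → K) (hφ : Isometry φ) (w : K → ℂ) (hw : w ∈ HolSet a) (lam : ℂ) (f : K → ℂ)
    (hf : f ∈ HolSet a) : (fun t => lam * f t - w t * f (φ t)) ∈ HolSet a := by
  obtain ⟨W, hW0, hW⟩ := hol_HB ha0 hw
  obtain ⟨M, hM0, hM⟩ := hol_HB ha0 hf
  exact ((hM.const_mul lam).sub (hW.mul hM0.le hW0.le (hM.comp hφ))).hol

theorem res_of {K : Type*} [MetricSpace K] [CompactSpace K] [Nonempty K] {a : ℝ} (ha0 : 0 < a)
    (φ : K → K) (hφ : Isometry φ) (w : K → ℂ) (hw : w ∈ HolSet a) (lam : ℂ)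
    (ψ : K → K) (hψ : Isometry ψ) (v : K → ℂ) (hv : v ∈ HolSet a)
    (C ρ : ℝ) (hC : 0 ≤ C) (hρ : 0 < ρ) (hρ1 : ρ < 1) (hb : ∀ n x, ‖cyc v ψ n x‖ ≤ C * ρ ^ n)
    (G : (K → ℂ) → (K → ℂ)) (P : ℝ) (hP : 0 < P)
    (hG : ∀ g M, 0 ≤ M → HB a g M → HB a (G g) (P * M)) (hG0 : ∀ x, G 0 x = 0)
    (hiff : ∀ f g : K → ℂ, (∀ x, lam * f x - w x * f (φ x) = g x) ↔
      (∀ x, f x - v x * f (ψ x) = G g x)) :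
    InResolvent (HolSet a) (holderNorm a) (fun f => fun t => w t * f (φ t)) lam := by
  obtain ⟨V, hV0, hV⟩ := hol_HB ha0 hv
  refine ⟨fun f hf => hol_T ha0 φ hφ w hw lam f hf, fun f hf h => ?_, ?_⟩
  · obtain ⟨M, hM0, hM⟩ := hol_HB ha0 hf
    have h1 := (hiff f 0).1 fun x => congrFun h x
    refine neumann_unique ψ v C ρ hρ hρ1 hb f M hM.1 fun x => ?_
    have := h1 x
    rw [hG0] at this
    exact sub_eq_zero.1 this
  · obtain ⟨D, hD, hN⟩ := neumann ψ hψ v V C ρ hV0.le hC hρ hρ1 hV hb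
    refine ⟨2 * (D * P), by positivity, fun g hg => ?_⟩
    have hgHB := HB.of_hol ha0 hg
    have hg0 : 0 ≤ holderNorm a g := (norm_nonneg _).trans (hgHB.1 (Classical.arbitrary K))
    obtain ⟨f, hf, hfe⟩ := hN (G g) (P * holderNorm a g) (by positivity) (hG g _ hg0 hgHB)
    refine ⟨f, hf.hol, funext ((hiff f g).2 hfe), hf.norm_le.trans (le_of_eq ?_)⟩
    ring

theorem main_lower {K : Type*} [MetricSpace K] [CompactSpace K] [ConnectedSpace K]
    [MeasurableSpace K] [BorelSpace K] (φ : K → K) (hφ : Isometry φ)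
    (hmeagre : IsMeagre {k : K | ∃ p : ℕ, 0 < p ∧ φ^[p] k = k})
    {a : ℝ} (ha0 : 0 < a) (ha1 : a ≤ 1) (w : K → ℂ) (hw : w ∈ HolSet a) (hwne : ∀ t, w t ≠ 0)
    (hu : Continuous fun t => Real.log ‖w t‖)
    (lam : ℂ) (hlam : lam ≠ 0)
    (hlo : ∀ ε > 0, ∃ μ : Measure K, IsProbabilityMeasure μ ∧ Measure.map φ μ = μ ∧
      Real.log ‖lam‖ - ε ≤ ∫ t, Real.log ‖w t‖ ∂μ)
    (hhi : ∀ ε > 0, ∃ μ : Measure K, IsProbabilityMeasure μ ∧ Measure.map φ μ = μ ∧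
      ∫ t, Real.log ‖w t‖ ∂μ ≤ Real.log ‖lam‖ + ε) :
    ¬ InResolvent (HolSet a) (holderNorm a) (fun f => fun t => w t * f (φ t)) lam := by
  rintro ⟨-, hinj, Q, hQ, hsur⟩
  have hbd : ∀ f ∈ HolSet (K := K) a,
      holderNorm a f ≤ Q * holderNorm a (fun t => lam * f t - w t * f (φ t)) := by
    intro f hf
    obtain ⟨f', hf', he, hle⟩ := hsur _ (hol_T ha0 φ hφ w hw lam f hf)
    have hs : (fun t => f' t - f t) ∈ HolSet a := by
      obtain ⟨M, -, hM⟩ := hol_HB ha0 hf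
      obtain ⟨M', -, hM'⟩ := hol_HB ha0 hf'
      exact (hM'.sub hM).hol
    have h0 := hinj _ hs (by
      funext t
      have := congrFun he t
      simp only [Pi.sub_apply, Pi.smul_apply, smul_eq_mul, Pi.zero_apply] at this ⊢
      linear_combination this)
    have : f' = f := funext fun t => sub_eq_zero.1 (congrFun h0 t)
    rwa [this] at hle
  have hl : 0 < ‖lam‖ := norm_pos_iff.2 hlam
  obtain ⟨W, hW0, hW⟩ := hol_HB ha0 hw
  obtain ⟨ε, hε, hε1, hεQ⟩ : ∃ ε : ℝ, 0 < ε ∧ ε ≤ 1 ∧ (4 * ε * ‖lam‖) * (16 * Q) ≤ 1 := by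
    refine ⟨min 1 (1 / (64 * ‖lam‖ * Q)), by positivity, min_le_left _ _, ?_⟩
    have := min_le_right 1 (1 / (64 * ‖lam‖ * Q))
    rw [le_div_iff₀ (by positivity)] at this
    linarith
  obtain ⟨y, hy, C, hC⟩ := aux_nonper φ hφ hmeagre (fun t => Real.log ‖w t‖) hu (Real.log ‖lam‖)
    hlo hhi (ε / 8) (by positivity)
  exact seq_contra ha0 ha1 φ hφ y hy w W hW0 hW hwne lam hlam Q ε C hQ hε hε1 hεQ hC hbd

end

/-- If `K` is a connected compact metric space, `φ` an isometry of `K` whose periodic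
points form a meagre set, and `w` invertible in `Lip_α(K)`, then the spectrum of
`T f = w·(f∘φ)` on `Lip_α(K)` is the annulus (possibly a circle) with radii
`r = min_{μ ∈ M_φ} exp(∫ ln|w| dμ)` and `R = max_{μ ∈ M_φ} exp(∫ ln|w| dμ)`, where
`M_φ` is the set of `φ`-invariant Borel probability measures on `K`. -/
theorem stmt14 {K : Type*} [MetricSpace K] [CompactSpace K] [ConnectedSpace K]
    [MeasurableSpace K] [BorelSpace K]
    (φ : K ≃ₜ K) (hφ : Isometry φ)
    (hmeagre : IsMeagre {k : K | ∃ p : ℕ, 0 < p ∧ (⇑φ)^[p] k = k})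
    (a : ℝ) (ha0 : 0 < a) (ha1 : a ≤ 1)
    (w : K → ℂ) (hw : w ∈ HolSet a) (hwne : ∀ t, w t ≠ 0)
    (hwinv : (fun t => (w t)⁻¹) ∈ HolSet a) :
    {lam : ℂ | ¬ InResolvent (HolSet a) (holderNorm a)
        (fun f => fun t => w t * f (φ t)) lam} =
    {lam : ℂ |
      sInf {x : ℝ | ∃ μ : Measure K, IsProbabilityMeasure μ ∧ Measure.map (⇑φ) μ = μ ∧
          x = Real.exp (∫ t, Real.log ‖w t‖ ∂μ)} ≤ ‖lam‖ ∧
      ‖lam‖ ≤ sSup {x : ℝ | ∃ μ : Measure K, IsProbabilityMeasure μ ∧ Measure.map (⇑φ) μ = μ ∧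
          x = Real.exp (∫ t, Real.log ‖w t‖ ∂μ)}} := by
  have hu : Continuous fun t => Real.log ‖w t‖ :=
    (hol_cont ha0 hw).norm.log fun t => (norm_pos_iff.2 (hwne t)).ne'
  have hwpos : ∀ t, 0 < ‖w t‖ := fun t => norm_pos_iff.2 (hwne t)
  have hi : ∀ (μ : Measure K) [IsProbabilityMeasure μ],
      Integrable (fun t => Real.log ‖w t‖) μ := fun μ _ =>
    hu.integrable_of_hasCompactSupport (HasCompactSupport.of_compactSpace _)
  have hφs : Isometry φ.symm := hφ.right_inv φ.apply_symm_apply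
  set S := {x : ℝ | ∃ μ : Measure K, IsProbabilityMeasure μ ∧ Measure.map (⇑φ) μ = μ ∧
          x = Real.exp (∫ t, Real.log ‖w t‖ ∂μ)} with hS
  obtain ⟨b, hb⟩ : ∃ b, ∀ x, |Real.log ‖w x‖| ≤ b := by
    obtain ⟨b, hb⟩ := (isCompact_range hu).isBounded.exists_norm_le
    exact ⟨b, fun x => hb _ (Set.mem_range_self x)⟩
  have hint : ∀ μ : Measure K, IsProbabilityMeasure μ → |∫ t, Real.log ‖w t‖ ∂μ| ≤ b := by
    intro μ hμ
    have := norm_integral_le_of_norm_le_const (μ := μ) (f := fun t => Real.log ‖w t‖) (C := b)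
      (Filter.Eventually.of_forall hb)
    simpa using this
  have hne : S.Nonempty := by
    obtain ⟨μ, h1, h2, -⟩ := aux_meas φ hφ (Classical.arbitrary K)
    exact ⟨_, μ, h1, h2, rfl⟩
  have hlow : ∀ x ∈ S, Real.exp (-b) ≤ x := by
    rintro _ ⟨μ, h1, h2, rfl⟩
    exact Real.exp_le_exp.2 (abs_le.1 (hint μ h1)).1
  have hupp : ∀ x ∈ S, x ≤ Real.exp b := by
    rintro _ ⟨μ, h1, h2, rfl⟩
    exact Real.exp_le_exp.2 (abs_le.1 (hint μ h1)).2
  have hba : BddAbove S := ⟨_, hupp⟩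
  have hbb : BddBelow S := ⟨_, hlow⟩
  have hr0 : 0 < sInf S := (Real.exp_pos _).trans_le (le_csInf hne hlow)
  have hrR : sInf S ≤ sSup S := csInf_le_csSup hne hbb hba
  have hR0 : 0 < sSup S := hr0.trans_le hrR
  have huR : ∀ μ : Measure K, IsProbabilityMeasure μ → Measure.map φ μ = μ →
      ∫ t, Real.log ‖w t‖ ∂μ ≤ Real.log (sSup S) := fun μ h1 h2 =>
    (Real.le_log_iff_exp_le hR0).2 (le_csSup hba ⟨μ, h1, h2, rfl⟩)
  have hur : ∀ μ : Measure K, IsProbabilityMeasure μ → Measure.map φ μ = μ →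
      Real.log (sInf S) ≤ ∫ t, Real.log ‖w t‖ ∂μ := fun μ h1 h2 =>
    (Real.log_le_iff_le_exp hr0).2 (csInf_le hbb ⟨μ, h1, h2, rfl⟩)
  ext lam
  constructor
  · intro hlam
    by_contra hcon
    refine hlam ?_
    have hcases : sSup S < ‖lam‖ ∨ ‖lam‖ < sInf S := by
      by_contra h
      push Not at h
      exact hcon ⟨h.2, h.1⟩
    rcases hcases with hl | hl
    · have hl0 : 0 < ‖lam‖ := hR0.trans hl
      have hlne : lam ≠ 0 := norm_pos_iff.1 hl0
      obtain ⟨C, ρ, hC, hρ, hρ1, hdec⟩ := decay φ hφ (fun t => lam⁻¹ * w t)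
        (fun t => Real.log ‖w t‖ - Real.log ‖lam‖) (hu.sub continuous_const) (fun t => by
          rw [Real.exp_sub, Real.exp_log (hwpos t), Real.exp_log hl0, norm_mul, norm_inv]
          exact le_of_eq (by ring)) (Real.log (sSup S) - Real.log ‖lam‖)
        (by have := Real.log_lt_log hR0 hl; linarith) (fun μ h1 h2 => by
          rw [integral_sub (hi μ) (integrable_const _)]
          simp only [integral_const, probReal_univ, one_smul]
          linarith [huR μ h1 h2])
      obtain ⟨W, hW0, hW⟩ := hol_HB ha0 hw
      refine res_of ha0 φ hφ w hw lam φ hφ (fun t => lam⁻¹ * w t) (hW.const_mul _).hol C ρ hC hρ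
        hρ1 hdec (fun g t => lam⁻¹ * g t) ‖lam⁻¹‖ (norm_pos_iff.2 (inv_ne_zero hlne))
        (fun g M _ hg => hg.const_mul _) (fun x => by simp) ?_
      intro f g
      refine forall_congr' fun x => ?_
      constructor
      · intro h
        rw [← h]
        field_simp
      · intro h
        have h2 : lam * (f x - lam⁻¹ * w x * f (φ x)) = lam * (lam⁻¹ * g x) := by rw [h]
        field_simp at h2
        exact h2
    · set l := (‖lam‖ + sInf S) / 2 with hldef
      have hl0 : 0 < l := by positivity
      have hl1 : ‖lam‖ ≤ l := by linarith
      have hl2 : l < sInf S := by linarith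
      obtain ⟨C, ρ, hC, hρ, hρ1, hdec⟩ := decay φ.symm hφs
        (fun t => lam * (w (φ.symm t))⁻¹)
        (fun t => Real.log l - Real.log ‖w (φ.symm t)‖)
        (continuous_const.sub (hu.comp φ.symm.continuous)) (fun t => by
          rw [Real.exp_sub, Real.exp_log (hwpos _), Real.exp_log hl0, norm_mul, norm_inv,
            div_eq_mul_inv]
          gcongr) (Real.log l - Real.log (sInf S))
        (by have := Real.log_lt_log hl0 hl2; linarith) (fun μ h1 h2 => by
          have h3 : Measure.map φ μ = μ := by
            conv_lhs => rw [← h2]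
            rw [Measure.map_map φ.continuous.measurable φ.symm.continuous.measurable]
            simp
          have h4 : ∫ t, Real.log ‖w (φ.symm t)‖ ∂μ = ∫ t, Real.log ‖w t‖ ∂μ := by
            conv_rhs => rw [← h2]
            rw [integral_map φ.symm.continuous.aemeasurable hu.aestronglyMeasurable]
          have h5 : Integrable (fun t => Real.log ‖w (φ.symm t)‖) μ :=
            (hu.comp φ.symm.continuous).integrable_of_hasCompactSupport
              (HasCompactSupport.of_compactSpace _)
          rw [integral_sub (integrable_const _) h5, h4]
          simp only [integral_const, probReal_univ, one_smul]
          linarith [hur μ h1 h3])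
      obtain ⟨W, hW0, hW⟩ := hol_HB ha0 hwinv
      refine res_of ha0 φ hφ w hw lam φ.symm hφs (fun t => lam * (w (φ.symm t))⁻¹)
        ((hW.comp hφs).const_mul lam).hol C ρ hC hρ hρ1 hdec
        (fun g t => (-1) * ((w (φ.symm t))⁻¹ * g (φ.symm t))) (2 * W) (by positivity)
        (fun g M hM hg => ?_) (fun x => by simp) ?_
      · have := ((hW.mul hM hW0.le hg).comp hφs).const_mul (-1)
        simpa using this
      · intro f g
        constructor
        · intro h x
          have h1 := h (φ.symm x)
          rw [φ.apply_symm_apply] at h1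
          have h2 := hwne (φ.symm x)
          rw [← h1]
          field_simp
          ring
        · intro h x
          have h1 := h (φ x)
          rw [φ.symm_apply_apply] at h1
          have h2 := hwne x
          field_simp at h1
          linear_combination -h1
  · rintro ⟨h1, h2⟩
    have hl0 : 0 < ‖lam‖ := hr0.trans_le h1
    refine main_lower φ hφ hmeagre ha0 ha1 w hw hwne hu lam (norm_pos_iff.1 hl0) ?_ ?_
    · intro ε hε
      have : Real.exp (Real.log ‖lam‖ - ε) < sSup S := by
        refine lt_of_lt_of_le ?_ h2
        conv_rhs => rw [← Real.exp_log hl0]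
        exact Real.exp_lt_exp.2 (by linarith)
      obtain ⟨_, ⟨μ, m1, m2, rfl⟩, hx⟩ := exists_lt_of_lt_csSup hne this
      exact ⟨μ, m1, m2, (Real.exp_lt_exp.1 hx).le⟩
    · intro ε hε
      have : sInf S < Real.exp (Real.log ‖lam‖ + ε) := by
        refine lt_of_le_of_lt h1 ?_
        conv_lhs => rw [← Real.exp_log hl0]
        exact Real.exp_lt_exp.2 (by linarith)
      obtain ⟨_, ⟨μ, m1, m2, rfl⟩, hx⟩ := exists_lt_of_csInf_lt hne this
      exact ⟨μ, m1, m2, (Real.exp_lt_exp.1 hx).le⟩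
end

section
/- Let A be the Wiener algebra of functions on the circle 𝕋 with absolutely convergent Fourier series, α ∈ 𝕋 not a root of unity, w ∈ A invertible, and (Tf)(z) = w(z) f(αz). Then the spectrum of T on A contains the circle c𝕋 of radius c = exp( (1/2π) ∫₀^{2π} ln|w(e^{iθ})| dθ ). -/
/-- The set of functions on the circle with absolutely convergent Fourier series
(the Wiener algebra). -/
def WienerSet : Set (Circle → ℂ) :=
  {f | ∃ c : ℤ → ℂ, Summable (fun n => ‖c n‖) ∧ ∀ z : Circle, f z = ∑' n : ℤ, c n * (z : ℂ) ^ n}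

/-- The Wiener norm `∑ |f̂(n)|` of a function on the circle. -/
noncomputable def wienerNorm (f : Circle → ℂ) : ℝ :=
  sInf {r : ℝ | ∃ c : ℤ → ℂ, Summable (fun n => ‖c n‖) ∧
    (∀ z : Circle, f z = ∑' n : ℤ, c n * (z : ℂ) ^ n) ∧ r = ∑' n : ℤ, ‖c n‖}

open Filter Topology MeasureTheory

theorem aux_dense (α : Circle) (hα : ∀ n : ℕ, 0 < n → α ^ n ≠ 1) :
    DenseRange (fun k : ℤ => α ^ k) := by
  obtain ⟨a, rfl⟩ : ∃ a : ℝ, Circle.exp a = α := ⟨_, Circle.exp_arg α⟩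
  have : Fact (0 < 2 * Real.pi) := ⟨by positivity⟩
  have h : DenseRange (· • a : ℤ → AddCircle (2 * Real.pi)) := by
    rw [AddCircle.denseRange_zsmul_iff, addOrderOf_eq_zero_iff']
    intro n hn h
    apply hα n hn
    have := congrArg Real.Angle.toCircle h
    rw [← AddCircle.coe_nsmul] at this
    erw [Real.Angle.toCircle_coe, Real.Angle.toCircle_zero] at this
    rw [← this]
    simp
  have hc : Continuous (Real.Angle.toCircle : AddCircle (2 * Real.pi) → Circle) :=
    continuous_quot_lift _ Circle.exp.continuous
  have hs : Function.Surjective (Real.Angle.toCircle : AddCircle (2 * Real.pi) → Circle) := by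
    intro z
    exact ⟨((Complex.arg z : ℝ) : Real.Angle), Circle.exp_arg z⟩
  have := hs.denseRange.comp h hc
  convert this using 1
  ext k : 1
  change _ = Real.Angle.toCircle (k • ((a : ℝ) : AddCircle (2 * Real.pi)))
  rw [← AddCircle.coe_zsmul]
  erw [Real.Angle.toCircle_coe]
  simp

def FRep (f : Circle → ℂ) (c : ℤ → ℂ) : Prop :=
  Summable (fun n => ‖c n‖) ∧ ∀ z : Circle, f z = ∑' n : ℤ, c n * (z : ℂ) ^ n

theorem mem_iff (f : Circle → ℂ) : f ∈ WienerSet ↔ ∃ c, FRep f c := Iff.rfl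

theorem norm_term (c : ℤ → ℂ) (z : Circle) (n : ℤ) : ‖c n * (z : ℂ) ^ n‖ = ‖c n‖ := by
  rw [norm_mul, norm_zpow, Circle.norm_coe, one_zpow, mul_one]

theorem FRep.summable {f c} (h : FRep f c) (z : Circle) :
    Summable (fun n : ℤ => c n * (z : ℂ) ^ n) := by
  apply Summable.of_norm
  simpa only [norm_term] using h.1

theorem FRep.hasSum {f c} (h : FRep f c) (z : Circle) :
    HasSum (fun n : ℤ => c n * (z : ℂ) ^ n) (f z) := by
  rw [h.2 z]; exact (h.summable z).hasSum

theorem FRep.norm_le {f c} (h : FRep f c) : wienerNorm f ≤ ∑' n, ‖c n‖ := by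
  apply csInf_le
  · refine ⟨0, ?_⟩
    rintro r ⟨c, -, -, rfl⟩
    positivity
  · exact ⟨c, h.1, h.2, rfl⟩

theorem exists_rep {f} (h : f ∈ WienerSet) {ε : ℝ} (hε : 0 < ε) :
    ∃ c, FRep f c ∧ ∑' n, ‖c n‖ < wienerNorm f + ε := by
  have := exists_lt_of_csInf_lt (s := {r : ℝ | ∃ c : ℤ → ℂ, Summable (fun n => ‖c n‖) ∧
    (∀ z : Circle, f z = ∑' n : ℤ, c n * (z : ℂ) ^ n) ∧ r = ∑' n : ℤ, ‖c n‖})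
    (b := wienerNorm f + ε) ?_ ?_
  · obtain ⟨r, ⟨c, h1, h2, rfl⟩, h3⟩ := this
    exact ⟨c, ⟨h1, h2⟩, h3⟩
  · obtain ⟨c, h1, h2⟩ := h
    exact ⟨_, c, h1, h2, rfl⟩
  · change wienerNorm f < _
    linarith

theorem W.cont {f} (h : f ∈ WienerSet) : Continuous f := by
  obtain ⟨c, h⟩ := h
  have : f = fun z : Circle => ∑' n : ℤ, c n * (z : ℂ) ^ n := funext h.2
  rw [this]
  refine continuous_tsum (u := fun n => ‖c n‖) ?_ h.1 ?_
  · intro n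
    have : (fun z : Circle => c n * (z : ℂ) ^ n) = fun z : Circle => c n * ((z ^ n : Circle) : ℂ) := by
      ext z; simp
    rw [this]
    exact continuous_const.mul (continuous_subtype_val.comp (continuous_zpow n))
  · intro n z
    exact (norm_term c z n).le

theorem W.le {f} (h : f ∈ WienerSet) (z : Circle) : ‖f z‖ ≤ wienerNorm f := by
  refine le_of_forall_pos_le_add fun ε hε => ?_
  obtain ⟨c, hc, hlt⟩ := exists_rep h hε
  refine le_trans ?_ hlt.le
  rw [hc.2 z]
  refine (norm_tsum_le_tsum_norm ?_).trans ?_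
  · simpa only [norm_term] using hc.1
  · simp only [norm_term]; exact le_rfl

theorem W.sub {f g} (hf : f ∈ WienerSet) (hg : g ∈ WienerSet) :
    (fun z => f z - g z) ∈ WienerSet ∧
      wienerNorm (fun z => f z - g z) ≤ wienerNorm f + wienerNorm g := by
  have key : ∀ c d, FRep f c → FRep g d → FRep (fun z => f z - g z) (fun n => c n - d n) := by
    intro c d hc hd
    refine ⟨Summable.of_nonneg_of_le (fun _ => norm_nonneg _) (fun n => norm_sub_le _ _)
      (hc.1.add hd.1), fun z => ?_⟩
    have := (hc.hasSum z).sub (hd.hasSum z)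
    refine this.tsum_eq.symm.trans ?_
    congr 1; ext n; ring
  constructor
  · obtain ⟨c, hc⟩ := hf
    obtain ⟨d, hd⟩ := hg
    exact ⟨_, key c d hc hd⟩
  · refine le_of_forall_pos_le_add fun ε hε => ?_
    obtain ⟨c, hc, hlt⟩ := exists_rep hf (half_pos hε)
    obtain ⟨d, hd, hlt'⟩ := exists_rep hg (half_pos hε)
    have h3 := (key c d hc hd).norm_le
    have h4 : ∑' n, ‖c n - d n‖ ≤ ∑' n, (‖c n‖ + ‖d n‖) :=
      Summable.tsum_le_tsum (fun n => norm_sub_le _ _) (key c d hc hd).1 (hc.1.add hd.1)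
    rw [hc.1.tsum_add hd.1] at h4
    linarith

theorem W.smul {f} (a : ℂ) (hf : f ∈ WienerSet) :
    (fun z => a * f z) ∈ WienerSet ∧
      wienerNorm (fun z => a * f z) ≤ ‖a‖ * wienerNorm f := by
  have key : ∀ c, FRep f c → FRep (fun z => a * f z) (fun n => a * c n) := by
    intro c hc
    refine ⟨by simpa using hc.1.mul_left ‖a‖, fun z => ?_⟩
    have := (hc.hasSum z).mul_left a
    refine this.tsum_eq.symm.trans ?_
    congr 1; ext n; ring
  constructor
  · obtain ⟨c, hc⟩ := hf
    exact ⟨_, key c hc⟩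
  · refine le_of_forall_pos_le_add fun ε hε => ?_
    obtain ⟨c, hc, hlt⟩ := exists_rep hf (ε := ε / (‖a‖ + 1)) (by positivity)
    have h3 := (key c hc).norm_le
    simp only [norm_mul, tsum_mul_left] at h3
    have h4 : ‖a‖ * ∑' n, ‖c n‖ ≤ ‖a‖ * (wienerNorm f + ε / (‖a‖ + 1)) := by gcongr
    have h5 : ‖a‖ * (ε / (‖a‖ + 1)) ≤ ε := by
      rw [mul_div_assoc', div_le_iff₀ (by positivity)]
      nlinarith [norm_nonneg a]
    linarith

theorem W.zmul {f} (k : ℤ) (hf : f ∈ WienerSet) :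
    (fun z : Circle => (z : ℂ) ^ k * f z) ∈ WienerSet ∧
      wienerNorm (fun z : Circle => (z : ℂ) ^ k * f z) ≤ wienerNorm f := by
  have key : ∀ c, FRep f c → FRep (fun z : Circle => (z : ℂ) ^ k * f z) (fun n => c (n - k)) := by
    intro c hc
    refine ⟨hc.1.comp_injective (sub_left_injective (b := k)), fun z => ?_⟩
    have := (hc.hasSum z).mul_left ((z : ℂ) ^ k)
    rw [← (Equiv.subRight k).hasSum_iff] at this
    refine this.tsum_eq.symm.trans ?_
    congr 1; ext n
    simp only [Function.comp, Equiv.subRight_apply]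
    have hz : (z : ℂ) ≠ 0 := z.coe_ne_zero
    rw [mul_left_comm, ← zpow_add₀ hz]
    congr 2; ring
  constructor
  · obtain ⟨c, hc⟩ := hf
    exact ⟨_, key c hc⟩
  · refine le_of_forall_pos_le_add fun ε hε => ?_
    obtain ⟨c, hc, hlt⟩ := exists_rep hf hε
    have h3 := (key c hc).norm_le
    have h4 := (Equiv.subRight k).tsum_eq (fun n => ‖c n‖)
    simp only [Equiv.subRight_apply] at h4
    linarith

theorem W.one : (fun _ : Circle => (1 : ℂ)) ∈ WienerSet ∧
    wienerNorm (fun _ : Circle => (1 : ℂ)) ≤ 1 := by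
  have key : FRep (fun _ : Circle => (1 : ℂ)) (Pi.single 0 1) := by
    refine ⟨summable_of_ne_finset_zero (s := {0}) ?_, fun z => ?_⟩
    · intro n hn
      simp at hn
      simp [hn]
    · rw [tsum_eq_single 0]
      · simp
      · intro n hn; simp [hn]
  refine ⟨⟨_, key⟩, key.norm_le.trans ?_⟩
  rw [tsum_eq_single 0]
  · simp
  · intro n hn; simp [hn]

/-- rotation invariance of the mean -/
theorem mean_rot (φ : Circle → ℝ) (β : Circle) :
    ∫ θ in (0:ℝ)..(2 * Real.pi), φ (β * Circle.exp θ) =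
      ∫ θ in (0:ℝ)..(2 * Real.pi), φ (Circle.exp θ) := by
  obtain ⟨b, rfl⟩ : ∃ b : ℝ, Circle.exp b = β := ⟨_, Circle.exp_arg β⟩
  simp only [← Circle.exp_add]
  rw [intervalIntegral.integral_comp_add_left (fun θ => φ (Circle.exp θ)) b]
  have hp : Function.Periodic (fun θ => φ (Circle.exp θ)) (2 * Real.pi) := by
    intro x
    simp only [Circle.periodic_exp x]
  have := hp.intervalIntegral_add_eq b 0
  simpa using this

theorem mean_prod (u : Circle → ℂ) (hu : Continuous u) (hne : ∀ z, u z ≠ 0) (α : Circle) (m : ℕ)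
    (h0 : ∫ θ in (0:ℝ)..(2 * Real.pi), Real.log ‖u (Circle.exp θ)‖ = 0) :
    ∫ θ in (0:ℝ)..(2 * Real.pi),
      Real.log ‖∏ k ∈ Finset.range m, u (α ^ k * Circle.exp θ)‖ = 0 := by
  have : ∀ θ : ℝ, Real.log ‖∏ k ∈ Finset.range m, u (α ^ k * Circle.exp θ)‖ =
      ∑ k ∈ Finset.range m, Real.log ‖u (α ^ k * Circle.exp θ)‖ := by
    intro θ
    rw [norm_prod, Real.log_prod]
    intro k _
    simp [hne]
  simp only [this]
  rw [intervalIntegral.integral_finsetSum]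
  · apply Finset.sum_eq_zero
    intro k _
    rw [mean_rot (fun z => Real.log ‖u z‖), h0]
  · intro k _
    apply Continuous.intervalIntegrable
    refine Continuous.log (by fun_prop) ?_
    intro x; simp [hne]

theorem fc_int (n : ℤ) :
    ∫ t in Set.Ioc (0:ℝ) 1, ((Real.fourierChar (-(t * n)) : Circle) : ℂ) =
      if n = 0 then 1 else 0 := by
  split_ifs with h
  · simp [h]
  · rw [← intervalIntegral.integral_of_le zero_le_one]
    have h1 : ∀ t : ℝ, ((Real.fourierChar (-(t * n)) : Circle) : ℂ) =
        Complex.exp ((-(2 * Real.pi * n * Complex.I)) * t) := by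
      intro t
      rw [Real.fourierChar_apply]
      congr 1
      push_cast
      ring
    simp only [h1]
    have hne : (-(2 * Real.pi * n * Complex.I)) ≠ 0 := by
      simp [h, Real.pi_ne_zero]
    rw [integral_exp_mul_complex hne]
    have : Complex.exp ((-(2 * Real.pi * n * Complex.I)) * (1:ℝ)) = 1 := by
      rw [Complex.exp_eq_one_iff]
      exact ⟨-n, by push_cast; ring⟩
    rw [this]
    simp

theorem core (u : Circle → ℂ) (hu : Continuous u) (hne : ∀ z, u z ≠ 0) (α : Circle)
    (hα : DenseRange (fun k : ℤ => α ^ k))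
    (h0 : ∫ θ in (0:ℝ)..(2 * Real.pi), Real.log ‖u (Circle.exp θ)‖ = 0)
    (F : Circle → C(Circle, ℂ)) (hF : Continuous F)
    (hEq : ∀ (μ z : Circle), F μ z - (μ : ℂ) * (u z * F μ (α * z)) = 1) : False := by
  obtain ⟨a, ha⟩ : ∃ a : ℤ → C(Circle, ℂ), ∀ n, a n =
      ∫ t in Set.Ioc (0:ℝ) 1, Real.fourierChar (-(t * n)) • F (Real.fourierChar t) :=
    ⟨_, fun _ => rfl⟩
  have hcf : Continuous (fun t : ℝ => Real.fourierChar t) := Real.continuous_fourierChar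
  have hcont : ∀ n : ℤ, Continuous
      (fun t : ℝ => Real.fourierChar (-(t * n)) • F (Real.fourierChar t)) := by
    intro n
    exact (hcf.comp (by fun_prop)).smul (hF.comp hcf)
  have hlim : Tendsto a cofinite (𝓝 0) := by
    have := (Real.tendsto_integral_exp_smul_cocompact
      ((Set.Ioc (0:ℝ) 1).indicator (fun t => F (Real.fourierChar t)))).comp
      Int.tendsto_coe_cofinite
    refine this.congr fun n => ?_
    rw [ha, ← integral_indicator measurableSet_Ioc]
    simp only [Function.comp]
    congr 1
    ext1 t
    by_cases ht : t ∈ Set.Ioc (0:ℝ) 1 <;> simp [ht]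
  have haz : ∀ n z, a n z = ∫ t in Set.Ioc (0:ℝ) 1,
      ((Real.fourierChar (-(t * n)) : Circle) : ℂ) * F (Real.fourierChar t) z := by
    intro n z
    have := (ContinuousMap.evalCLM ℂ z : C(Circle, ℂ) →L[ℂ] ℂ).integral_comp_comm
      (μ := volume.restrict (Set.Ioc (0:ℝ) 1))
      (φ := fun t : ℝ => Real.fourierChar (-(t * n)) • F (Real.fourierChar t))
      ((hcont n).integrableOn_Ioc)
    rw [ha]
    exact this.symm
  have hrec : ∀ n z, a n z = u z * a (n - 1) (α * z) + if n = 0 then 1 else 0 := by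
    intro n z
    rw [haz, haz, ← fc_int, ← integral_const_mul, ← integral_add]
    · congr 1
      ext1 t
      have h1 := hEq (Real.fourierChar t) z
      have h2 : ((Real.fourierChar (-(t * (n - 1 : ℤ))) : Circle) : ℂ) =
          (Real.fourierChar (-(t * n)) : Circle) * (Real.fourierChar t : Circle) := by
        rw [← Circle.coe_mul, ← AddChar.map_add_eq_mul]
        congr 2
        push_cast; ring
      rw [h2]
      linear_combination ((Real.fourierChar (-(t * n)) : Circle) : ℂ) * h1
    · refine Continuous.integrableOn_Ioc ?_
      refine continuous_const.mul ((continuous_subtype_val.comp (hcf.comp (by fun_prop))).mul ?_)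
      exact (ContinuousMap.evalCLM ℂ (α * z) : C(Circle, ℂ) →L[ℂ] ℂ).continuous.comp (hF.comp hcf)
    · refine Continuous.integrableOn_Ioc ?_
      exact (continuous_subtype_val.comp (hcf.comp (by fun_prop)))
  clear ha haz hcont hEq hcf hF
  have hpos : ∀ (m : ℕ) (j : ℕ) z, a (j + m : ℕ) z =
      (∏ k ∈ Finset.range m, u (α ^ k * z)) * a j (α ^ m * z) := by
    intro m
    induction m with
    | zero => intro j z; simp
    | succ m ih =>
      intro j z
      have h1 := ih (j + 1) z
      rw [hrec (j + 1 : ℕ) (α ^ m * z), if_neg (by omega)] at h1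
      rw [show j + (m + 1) = j + 1 + m by ring, h1, Finset.prod_range_succ,
        show ((j + 1 : ℕ) : ℤ) - 1 = j by push_cast; ring, pow_succ' α m, mul_assoc α]
      ring
  have hneg : ∀ (m : ℕ) z, a 0 z - 1 =
      (∏ k ∈ Finset.range (m + 1), u (α ^ k * z)) * a (-(m + 1 : ℕ)) (α ^ (m + 1) * z) := by
    intro m z
    induction m with
    | zero =>
      rw [hrec 0 z]
      simp
    | succ m ih =>
      rw [ih, hrec (-(m + 1 : ℕ)) _, if_neg (by omega), Finset.prod_range_succ _ (m + 1),
        show (-((m + 1 : ℕ) : ℤ)) - 1 = -((m + 1 + 1 : ℕ) : ℤ) by push_cast; ring,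
        pow_succ' α (m + 1), mul_assoc α]
      ring
  have hn := hlim.norm
  rw [norm_zero] at hn
  have hl1 : Tendsto (fun m : ℕ => ‖a ((m + 1 : ℕ) : ℤ)‖) atTop (𝓝 0) := by
    have : Tendsto (fun m : ℕ => ((m + 1 : ℕ) : ℤ)) atTop cofinite := by
      rw [← Nat.cofinite_eq_atTop]
      exact Function.Injective.tendsto_cofinite (fun x y h => by simpa using h)
    exact hn.comp this
  have hl2 : Tendsto (fun m : ℕ => ‖a (-((m + 1 : ℕ) : ℤ))‖) atTop (𝓝 0) := by
    have : Tendsto (fun m : ℕ => (-((m + 1 : ℕ) : ℤ))) atTop cofinite := by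
      rw [← Nat.cofinite_eq_atTop]
      exact Function.Injective.tendsto_cofinite (fun x y h => by
        simp only [neg_inj, Nat.cast_inj, Nat.add_right_cancel_iff] at h; exact h)
    exact hn.comp this
  have hUc : ∀ m : ℕ, Continuous fun θ : ℝ =>
      Real.log ‖∏ k ∈ Finset.range m, u (α ^ k * Circle.exp θ)‖ := by
    intro m
    refine Continuous.log (by fun_prop) ?_
    intro x
    simp [Finset.prod_eq_zero_iff, hne]
  have hpi : (0:ℝ) < 2 * Real.pi := by positivity
  by_cases hp : ∃ z0, a 0 z0 ≠ 1
  · obtain ⟨z0, hz0⟩ := hp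
    have hz0' : 0 < ‖a 0 z0 - 1‖ := norm_pos_iff.mpr (sub_ne_zero.mpr hz0)
    have ht : Tendsto (fun m : ℕ => a 0 (α ^ (m + 1) * z0)) atTop (𝓝 0) := by
      rw [tendsto_zero_iff_norm_tendsto_zero]
      have h2 := (hl1.mul hl2).div_const ‖a 0 z0 - 1‖
      simp only [mul_zero, zero_div] at h2
      refine squeeze_zero (fun _ => norm_nonneg _) (fun m => ?_) h2
      rw [le_div_iff₀ hz0', ← norm_mul]
      have h3 := hpos (m + 1) 0 z0
      have h4 := hneg m z0
      simp only [Nat.cast_zero, zero_add] at h3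
      have h5 : a 0 (α ^ (m + 1) * z0) * (a 0 z0 - 1) =
          a (m + 1 : ℕ) z0 * a (-(m + 1 : ℕ)) (α ^ (m + 1) * z0) := by
        rw [h3, h4]; ring
      rw [h5, norm_mul]
      gcongr
      · exact ContinuousMap.norm_coe_le_norm _ _
      · exact ContinuousMap.norm_coe_le_norm _ _
    have ht' : Tendsto (fun m : ℕ => a 0 (α ^ m * z0)) atTop (𝓝 0) :=
      (tendsto_add_atTop_iff_nat 1).mp ht
    have hzero : ∀ z, a 0 z = 0 := by
      intro z
      have h1 : MapClusterPt (z * z0⁻¹) atTop (fun m : ℕ => α ^ m) :=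
        ((mapClusterPt_atTop_pow_tfae (z * z0⁻¹) α).out 0 3).mpr (hα _)
      have h2 : MapClusterPt (a 0 (z * z0⁻¹ * z0)) atTop (fun m : ℕ => a 0 (α ^ m * z0)) :=
        h1.continuousAt_comp (f := fun x => a 0 (x * z0)) (by fun_prop)
      rw [inv_mul_cancel_right] at h2
      have h3 : ClusterPt (a 0 z) (𝓝 0) := h2.clusterPt.mono ht'
      exact eq_of_nhds_neBot h3
    obtain ⟨m, hm⟩ := ((tendsto_order.mp hl2).2 1 one_pos).exists
    have hbig : ∀ z, 1 < ‖∏ k ∈ Finset.range (m + 1), u (α ^ k * z)‖ := by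
      intro z
      have h4 := congrArg norm (hneg m z)
      rw [hzero, zero_sub, norm_neg, norm_one, norm_mul] at h4
      have h5 := ContinuousMap.norm_coe_le_norm (a (-(m + 1 : ℕ))) (α ^ (m + 1) * z)
      by_contra hcon
      push Not at hcon
      have := mul_le_mul hcon h5 (norm_nonneg _) zero_le_one
      linarith
    have := intervalIntegral.intervalIntegral_pos_of_pos
      ((hUc (m + 1)).intervalIntegrable 0 (2 * Real.pi))
      (fun θ => Real.log_pos (hbig (Circle.exp θ))) hpi
    rw [mean_prod u hu hne α (m + 1) h0] at this
    exact lt_irrefl _ this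
  · push Not at hp
    obtain ⟨m, hm⟩ := ((tendsto_order.mp hl1).2 1 one_pos).exists
    have hsm : ∀ z, ‖∏ k ∈ Finset.range (m + 1), u (α ^ k * z)‖ < 1 := by
      intro z
      have h3 := hpos (m + 1) 0 z
      simp only [Nat.cast_zero, zero_add, hp, mul_one] at h3
      rw [← h3]
      exact (ContinuousMap.norm_coe_le_norm _ _).trans_lt hm
    have := intervalIntegral.intervalIntegral_pos_of_pos
      ((hUc (m + 1)).neg.intervalIntegrable 0 (2 * Real.pi))
      (fun θ => neg_pos.mpr (Real.log_neg (norm_pos_iff.mpr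
        (Finset.prod_ne_zero_iff.mpr fun _ _ => hne _)) (hsm (Circle.exp θ)))) hpi
    simp only [Pi.neg_apply] at this
    rw [intervalIntegral.integral_neg, mean_prod u hu hne α (m + 1) h0] at this
    simp at this

theorem getF (u : Circle → ℂ) (α : Circle)
    (hα : DenseRange (fun k : ℤ => α ^ k)) (C : ℝ) (hC : 0 < C)
    (hs : ∀ g ∈ WienerSet, ∃ f ∈ WienerSet, (∀ z, f z - u z * f (α * z) = g z) ∧
      wienerNorm f ≤ C * wienerNorm g)
    (hi : ∀ f ∈ WienerSet, (∀ z, f z - u z * f (α * z) = 0) → ∀ z, f z = 0) :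
    ∃ F : Circle → C(Circle, ℂ), Continuous F ∧
      ∀ (μ z : Circle), F μ z - (μ : ℂ) * (u z * F μ (α * z)) = 1 := by
  have solve : ∀ (k : ℤ), ∀ g ∈ WienerSet, ∃ f ∈ WienerSet,
      (∀ z, f z - ((α : ℂ) ^ k) * (u z * f (α * z)) = g z) ∧
      wienerNorm f ≤ C * wienerNorm g := by
    intro k g hg
    obtain ⟨h, hh, he, hb⟩ := hs _ (W.zmul k hg).1
    refine ⟨_, (W.zmul (-k) hh).1, fun z => ?_, ?_⟩
    · have h1 := he z
      have hz : (z : ℂ) ≠ 0 := z.coe_ne_zero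
      have ha : (α : ℂ) ≠ 0 := α.coe_ne_zero
      simp only [Circle.coe_mul, mul_zpow, zpow_neg]
      have h2 : g z = ((z : ℂ) ^ k)⁻¹ * (h z - u z * h (α * z)) := by
        rw [h1]; field_simp
      rw [h2]
      field_simp
    · refine (W.zmul (-k) hh).2.trans (hb.trans ?_)
      gcongr
      exact (W.zmul k hg).2
  have inj : ∀ (k : ℤ), ∀ f ∈ WienerSet,
      (∀ z, f z - ((α : ℂ) ^ k) * (u z * f (α * z)) = 0) → ∀ z, f z = 0 := by
    intro k f hf h z
    have h1 := hi _ (W.zmul k hf).1 (fun z => by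
      simp only [Circle.coe_mul, mul_zpow]
      linear_combination ((z : ℂ) ^ k) * h z) z
    have hz : (z : ℂ) ≠ 0 := z.coe_ne_zero
    simpa [zpow_ne_zero k hz] using h1
  have bound : ∀ (k : ℤ), ∀ f ∈ WienerSet, ∀ g ∈ WienerSet,
      (∀ z, f z - ((α : ℂ) ^ k) * (u z * f (α * z)) = g z) →
      wienerNorm f ≤ C * wienerNorm g := by
    intro k f hf g hg h
    obtain ⟨f', hf', he, hb⟩ := solve k g hg
    have : f = f' := by
      ext z
      have := inj k _ (W.sub hf hf').1 (fun z => by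
        linear_combination h z - he z) z
      exact sub_eq_zero.mp this
    rw [this]; exact hb
  choose G hG hGe hGb using fun k => solve k _ W.one.1
  have hGb' : ∀ k, wienerNorm (G k) ≤ C := by
    intro k
    refine (hGb k).trans ?_
    nlinarith [W.one.2]
  have lip : ∀ k l, wienerNorm (fun z => G k z - G l z) ≤
      C * (C + 1) * dist (α ^ k) (α ^ l) := by
    intro k l
    have ha : (α : ℂ) ≠ 0 := α.coe_ne_zero
    have hD := W.sub (hG l) W.one.1
    have hS := W.smul ((α : ℂ) ^ k * ((α : ℂ) ^ l)⁻¹ - 1) hD.1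
    have h1 := bound k _ (W.sub (hG k) (hG l)).1 _ hS.1 (fun z => by
      have e1 := hGe k z
      have e2 := hGe l z
      have e3 : u z * G l (α * z) = ((α : ℂ) ^ l)⁻¹ * (G l z - 1) := by
        rw [← e2]; field_simp; ring
      simp only [mul_sub, e3]
      linear_combination e1)
    have h2 : ‖(α : ℂ) ^ k * ((α : ℂ) ^ l)⁻¹ - 1‖ = dist (α ^ k) (α ^ l) := by
      have h4 : dist (α ^ k) (α ^ l) = ‖((α ^ k : Circle) : ℂ) - ((α ^ l : Circle) : ℂ)‖ :=
        (Subtype.dist_eq _ _).trans (dist_eq_norm _ _)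
      rw [h4, Circle.coe_zpow, Circle.coe_zpow]
      have h3 : (α : ℂ) ^ k * ((α : ℂ) ^ l)⁻¹ - 1 =
        ((α : ℂ) ^ k - (α : ℂ) ^ l) * ((α : ℂ) ^ l)⁻¹ := by field_simp
      rw [h3, norm_mul, norm_inv, norm_zpow, Circle.norm_coe]
      simp
    rw [h2] at hS
    have h5 : wienerNorm (fun z => G l z - 1) ≤ C + 1 :=
      hD.2.trans (add_le_add (hGb' l) W.one.2)
    calc _ ≤ _ := h1
      _ ≤ C * (dist (α ^ k) (α ^ l) * (C + 1)) := by
        gcongr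
        exact hS.2.trans (by gcongr)
      _ = _ := by ring
  let s : Set Circle := Set.range (fun k : ℤ => α ^ k)
  have hsd : Dense s := hα
  have hex : ∀ x : s, ∃ k : ℤ, α ^ k = (x : Circle) := fun x => x.2
  choose idx hidx using hex
  let f : s → C(Circle, ℂ) := fun x => ⟨G (idx x), W.cont (hG _)⟩
  have hK : 0 ≤ C * (C + 1) := by positivity
  have hf : LipschitzWith ⟨C * (C + 1), hK⟩ f := by
    refine LipschitzWith.of_dist_le_mul fun x y => ?_
    rw [ContinuousMap.dist_le (by positivity)]
    intro z
    have h1 := (W.le (W.sub (hG (idx x)) (hG (idx y))).1 z).trans (lip (idx x) (idx y))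
    rw [hidx x, hidx y] at h1
    rw [dist_eq_norm]
    exact h1
  refine ⟨hsd.extend f, (hsd.lipschitzWith_extend hf).continuous, ?_⟩
  have hc : Continuous (hsd.extend f) := (hsd.lipschitzWith_extend hf).continuous
  intro μ z
  have hcl : IsClosed {μ : Circle |
      hsd.extend f μ z - (μ : ℂ) * (u z * hsd.extend f μ (α * z)) = 1} := by
    refine isClosed_eq ?_ continuous_const
    have e : ∀ y : Circle, Continuous fun μ => hsd.extend f μ y := fun y =>
      (ContinuousMap.evalCLM ℂ y : C(Circle, ℂ) →L[ℂ] ℂ).continuous.comp hc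
    exact (e z).sub (continuous_subtype_val.mul (continuous_const.mul (e _)))
  refine (hcl.closure_subset_iff.mpr ?_) (hsd μ)
  intro x hx
  change hsd.extend f x z - (x : ℂ) * (u z * hsd.extend f x (α * z)) = 1
  have h1 : hsd.extend f x = f ⟨x, hx⟩ := hsd.extend_eq hf.continuous ⟨x, hx⟩
  have h2 := hGe (idx ⟨x, hx⟩) z
  rw [← Circle.coe_zpow] at h2
  have h3 : α ^ idx ⟨x, hx⟩ = x := hidx ⟨x, hx⟩
  rw [h3] at h2
  rw [h1]
  exact h2
/-- For the Wiener algebra `A` of absolutely convergent Fourier series on `𝕋`, an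
invertible weight `w ∈ A`, and a rotation `z ↦ α z` with `α` not a root of unity, the
spectrum of `(Tf)(z) = w(z) f(α z)` on `A` contains the circle of radius
`c = exp((1/2π) ∫₀^{2π} ln |w(e^{iθ})| dθ)`. -/
theorem stmt15 (w : Circle → ℂ) (hw : w ∈ WienerSet) (hwne : ∀ z, w z ≠ 0)
    (hwinv : (fun z => (w z)⁻¹) ∈ WienerSet)
    (α : Circle) (hα : ∀ n : ℕ, 0 < n → α ^ n ≠ 1) :
    {lam : ℂ | ‖lam‖ =
        Real.exp ((2 * Real.pi)⁻¹ * ∫ θ in (0:ℝ)..(2 * Real.pi),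
          Real.log ‖w (Circle.exp θ)‖)} ⊆
    {lam : ℂ | ¬ InResolvent WienerSet wienerNorm
        (fun f => fun z => w z * f (α * z)) lam} := by
  intro lam hlam hres
  simp only [Set.mem_ofPred_eq] at hlam
  have hlpos : 0 < ‖lam‖ := by rw [hlam]; exact Real.exp_pos _
  have hl0 : lam ≠ 0 := norm_pos_iff.mp hlpos
  obtain ⟨-, hinj, C, hC, hsol⟩ := hres
  have hd := aux_dense α hα
  have hwc := W.cont hw
  obtain ⟨F, hF, hE⟩ := getF (fun z => w z / lam) α hd (C * ‖lam‖) (by positivity) (by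
    intro g hg
    obtain ⟨f, hf, he, hb⟩ := hsol _ (W.smul lam hg).1
    refine ⟨f, hf, fun z => ?_, ?_⟩
    · have := congrFun he z
      simp only [Pi.sub_apply, Pi.smul_apply, smul_eq_mul] at this
      field_simp
      linear_combination this
    · refine hb.trans ?_
      rw [mul_assoc]
      gcongr
      exact (W.smul lam hg).2) (by
    intro f hf h z
    refine congrFun (hinj f hf ?_) z
    ext z
    have := h z
    simp only [Pi.sub_apply, Pi.smul_apply, smul_eq_mul, Pi.zero_apply]
    field_simp at this
    linear_combination this)
  refine core (fun z => w z / lam) (by fun_prop) (fun z => div_ne_zero (hwne z) hl0) α hd ?_ F hF hE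
  have h1 : ∀ θ : ℝ, Real.log ‖w (Circle.exp θ) / lam‖ =
      Real.log ‖w (Circle.exp θ)‖ - Real.log ‖lam‖ := by
    intro θ
    rw [norm_div, Real.log_div (norm_ne_zero_iff.mpr (hwne _)) hlpos.ne']
  simp only [h1]
  rw [intervalIntegral.integral_sub, hlam, Real.log_exp]
  · simp only [intervalIntegral.integral_const, smul_eq_mul, sub_zero]
    have := Real.pi_ne_zero
    field_simp
    ring
  · apply Continuous.intervalIntegrable
    refine Continuous.log (by fun_prop) ?_
    intro x; simp [hwne]
  · exact intervalIntegrable_const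
end
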